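/- Let n ≥ 6. A connected simple graph G on n vertices has exactly four distinct distance Laplacian eigenvalues and largest distance Laplacian eigenvalue of multiplicity n−3 if and only if G is isomorphic to one of K_{2,n−2}, K_{n/2,n/2}+e (n even), or K_{1,n−1}+e. -/

import Mathlib

open Matrix

/-- The distance Laplacian matrix of a graph: diagonal entries are the transmissions
`Tr(v) = ∑ u, d(v,u)`, off-diagonal entries are `-d(u,v)`. -/
noncomputable def distLaplacian {V : Type*} [Fintype V] [DecidableEq V]
    (G : SimpleGraph V) : Matrix V V ℝ :=
  Matrix.of fun i j => if i = j then ∑ k : V, (G.dist i k : ℝ) else -(G.dist i j : ℝ)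

/-- The multiplicity of `μ` as an eigenvalue of `M`, i.e. the dimension of the
corresponding eigenspace. -/
noncomputable def eigMult {V : Type*} [Fintype V] (M : Matrix V V ℝ) (μ : ℝ) : ℕ :=
  Module.finrank ℝ (Module.End.eigenspace M.mulVecLin μ)

/-- The largest eigenvalue of a matrix. -/
noncomputable def lambdaMax {V : Type*} [Fintype V] (M : Matrix V V ℝ) : ℝ :=
  sSup {μ : ℝ | Module.End.HasEigenvalue M.mulVecLin μ}

/-- The transmission of a vertex. -/
noncomputable def transmission {V : Type*} [Fintype V] (G : SimpleGraph V) (v : V) : ℕ :=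
  ∑ u : V, G.dist v u

/-- The star `K_{1,k+2}` together with an extra edge joining two pendant vertices:
the centre is the `Unit` vertex, the pendant vertices are `Bool ⊕ Fin k`, and the extra
edge joins the two `Bool` pendant vertices.  (It has `k + 3` vertices.) -/
def starPlusEdge (k : ℕ) : SimpleGraph (Unit ⊕ Bool ⊕ Fin k) :=
  completeBipartiteGraph Unit (Bool ⊕ Fin k) ⊔
    SimpleGraph.fromEdgeSet {s(Sum.inr (Sum.inl false), Sum.inr (Sum.inl true))}

/-- The complete bipartite graph `K_{k+2,k+2}` together with an extra edge joining two
vertices on the same side (the two `Bool` vertices). -/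
def bipPlusEdge (k : ℕ) : SimpleGraph ((Bool ⊕ Fin k) ⊕ Fin (k + 2)) :=
  completeBipartiteGraph (Bool ⊕ Fin k) (Fin (k + 2)) ⊔
    SimpleGraph.fromEdgeSet {s(Sum.inl (Sum.inl false), Sum.inl (Sum.inl true))}

/-!
Let `λ` be the largest eigenvalue. All eigenspaces but that of `λ` are lines, spanned by `1` and two
further eigenvectors. Scaling the latter gives vectors `p v` in the Euclidean plane with
`⟪p u, p v⟫ = d(u, v) - c` for `u ≠ v`, where `c = λ / n > 1` and `∑ v, p v = 0`; the two nonzero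
eigenvalues below `λ` being distinct says that `p` stretches the two axes differently. In a plane
the vectors orthogonal to a nonzero vector are proportional, and for `n ≥ 6` this yields a vertex
`m` with `‖p m‖² = 2 - c`. Let `A` be the set of non-neighbours of `m`, including `m` itself. The
squared norm of `∑ a ∈ A, (p a - p m)` is then a sum of nonpositive terms, so `G` is the join of its
parts on `A` and `Aᶜ`. What is left of `p` is one real coordinate `s`, orthogonal to `p m`, in which
the products `s i * s j` are determined by adjacency; its sign pattern leaves only the three
families.

Conversely, for these families the distance Laplacian is `λ • 1 - Wᵀ K W` with `K` diagonal and
three pairwise orthogonal rows in `W`, from which the spectrum can be read off.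
-/

section OrthogonalRows

open Module

variable {ι V : Type*} [Fintype ι] [DecidableEq ι] [Fintype V]
  {M : Matrix V V ℝ} {W : Matrix ι V ℝ} {s a κ : ι → ℝ} {lam μ : ℝ}

theorem mulVec_transpose_mulVec_of_orthogonal_rows (hW : W * Wᵀ = diagonal s) (y : ι → ℝ) :
    W *ᵥ (Wᵀ *ᵥ y) = s * y := by
  ext i
  rw [mulVec_mulVec, hW, mulVec_diagonal, Pi.mul_apply]

theorem finrank_ker_mulVecLin_add_card_of_orthogonal_rows (hs : ∀ i, s i ≠ 0)
    (hW : W * Wᵀ = diagonal s) :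
    finrank ℝ (LinearMap.ker W.mulVecLin) + Fintype.card ι = Fintype.card V := by
  have hsurj : LinearMap.range W.mulVecLin = ⊤ := LinearMap.range_eq_top.2 fun y =>
    ⟨Wᵀ *ᵥ (y / s), by
      rw [mulVecLin_apply, mulVec_transpose_mulVec_of_orthogonal_rows hW]
      ext i
      exact mul_div_cancel₀ _ (hs i)⟩
  have hrank := W.mulVecLin.finrank_range_add_finrank_ker
  rw [hsurj, finrank_top, finrank_fintype_fun_eq_card, finrank_fintype_fun_eq_card] at hrank
  rw [← hrank, add_comm]

theorem eigenspace_le_ker_of_eigenvector_rows (hM : M.IsSymm)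
    (hMW : M * Wᵀ = Wᵀ * diagonal a) (ha : ∀ i, a i ≠ lam) :
    End.eigenspace M.mulVecLin lam ≤ LinearMap.ker W.mulVecLin := by
  intro x hx
  rw [End.mem_eigenspace_iff, mulVecLin_apply] at hx
  have hWM : W * M = diagonal a * W := by
    simpa only [transpose_mul, transpose_transpose, hM.eq, diagonal_transpose]
      using congrArg transpose hMW
  rw [LinearMap.mem_ker, mulVecLin_apply]
  ext i
  have hi : a i * (W *ᵥ x) i = lam * (W *ᵥ x) i := by
    simpa only [← mulVec_mulVec, hx, mulVec_smul, mulVec_diagonal, Pi.smul_apply, smul_eq_mul]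
      using (congrFun (congrArg (· *ᵥ x) hWM) i).symm
  exact (mul_eq_mul_right_iff.1 hi).resolve_left (ha i)

theorem eq_smul_one_sub_of_orthogonal_eigenvector_rows [DecidableEq V] (hM : M.IsSymm)
    (hs : ∀ i, s i ≠ 0) (hW : W * Wᵀ = diagonal s) (hMW : M * Wᵀ = Wᵀ * diagonal a)
    (ha : ∀ i, a i ≠ lam) (hmult : eigMult M lam + Fintype.card ι = Fintype.card V) :
    M = lam • 1 - Wᵀ * diagonal (fun i => (lam - a i) / s i) * W := by
  have heq : End.eigenspace M.mulVecLin lam = LinearMap.ker W.mulVecLin :=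
    Submodule.eq_of_le_of_finrank_eq (eigenspace_le_ker_of_eigenvector_rows hM hMW ha)
      (Nat.add_right_cancel
        (hmult.trans (finrank_ker_mulVecLin_add_card_of_orthogonal_rows hs hW).symm))
  set P : Matrix V V ℝ := Wᵀ * diagonal s⁻¹ * W with hP
  have hWP : W * P = W := by
    rw [hP, ← Matrix.mul_assoc, ← Matrix.mul_assoc, hW, diagonal_mul_diagonal]
    simp [hs]
  have hMP : M * P = Wᵀ * diagonal (a * s⁻¹) * W := by
    rw [hP, ← Matrix.mul_assoc, ← Matrix.mul_assoc, hMW, Matrix.mul_assoc Wᵀ,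
      diagonal_mul_diagonal]
    rfl
  have hQ : M * (1 - P) = lam • (1 - P) := by
    refine Matrix.ext_of_mulVec_single fun v => ?_
    have hker : (1 - P) *ᵥ Pi.single v 1 ∈ LinearMap.ker W.mulVecLin := by
      rw [LinearMap.mem_ker, mulVecLin_apply, mulVec_mulVec, Matrix.mul_sub, hWP,
        Matrix.mul_one, sub_self, zero_mulVec]
    rw [← heq, End.mem_eigenspace_iff, mulVecLin_apply] at hker
    rw [← mulVec_mulVec, hker, smul_mulVec]
  have hdiag : diagonal (fun i => (lam - a i) / s i) = lam • diagonal s⁻¹ - diagonal (a * s⁻¹) := by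
    ext i j
    by_cases hij : i = j
    · subst hij; simp [div_eq_mul_inv, sub_mul]
    · simp [hij]
  calc M = M * (1 - P) + M * P := by rw [← Matrix.mul_add, sub_add_cancel, Matrix.mul_one]
    _ = lam • (1 - P) + Wᵀ * diagonal (a * s⁻¹) * W := by rw [hQ, hMP]
    _ = _ := by
      rw [hdiag, Matrix.mul_sub, Matrix.sub_mul, Matrix.mul_smul, Matrix.smul_mul, ← hP, smul_sub]
      abel

theorem smul_one_sub_mulVec [DecidableEq V] (x : V → ℝ) :
    (lam • 1 - Wᵀ * diagonal κ * W) *ᵥ x = lam • x - Wᵀ *ᵥ (κ * W *ᵥ x) := by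
  rw [sub_mulVec, smul_mulVec, one_mulVec, ← mulVec_mulVec, ← mulVec_mulVec]
  congr 2
  ext i
  rw [mulVec_diagonal, Pi.mul_apply]

theorem eigMult_smul_one_sub_add_card [DecidableEq V] (hs : ∀ i, s i ≠ 0) (hκ : ∀ i, κ i ≠ 0)
    (hW : W * Wᵀ = diagonal s) :
    eigMult (lam • 1 - Wᵀ * diagonal κ * W) lam + Fintype.card ι = Fintype.card V := by
  suffices End.eigenspace (lam • 1 - Wᵀ * diagonal κ * W).mulVecLin lam =
      LinearMap.ker W.mulVecLin by
    rw [← finrank_ker_mulVecLin_add_card_of_orthogonal_rows hs hW, eigMult, this]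
  ext x
  rw [End.mem_eigenspace_iff, LinearMap.mem_ker, mulVecLin_apply, mulVecLin_apply,
    smul_one_sub_mulVec, sub_eq_self]
  refine ⟨fun hx => ?_, fun hx => by rw [hx, mul_zero, mulVec_zero]⟩
  have hWx := congrArg (W *ᵥ ·) hx
  simp only [mulVec_transpose_mulVec_of_orthogonal_rows hW, mulVec_zero] at hWx
  ext i
  simpa [hs i, hκ i] using congrFun hWx i

theorem hasEigenvalue_smul_one_sub_iff [DecidableEq V] (hs : ∀ i, s i ≠ 0) (hκ : ∀ i, κ i ≠ 0)
    (hW : W * Wᵀ = diagonal s) (hcard : Fintype.card ι < Fintype.card V) :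
    End.HasEigenvalue (lam • 1 - Wᵀ * diagonal κ * W).mulVecLin μ ↔
      μ = lam ∨ ∃ i, μ = lam - κ i * s i := by
  constructor
  · intro hμ
    obtain ⟨x, hx, hx0⟩ := hμ.exists_hasEigenvector
    rw [End.mem_eigenspace_iff, mulVecLin_apply, smul_one_sub_mulVec] at hx
    by_cases hWx : W *ᵥ x = 0
    · rw [hWx, mul_zero, mulVec_zero, sub_zero] at hx
      exact Or.inl (smul_left_injective ℝ hx0 hx).symm
    · obtain ⟨i, hi⟩ := Function.ne_iff.1 hWx
      have hWi := congrFun (congrArg (W *ᵥ ·) hx) i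
      simp only [mulVec_sub, mulVec_smul, mulVec_transpose_mulVec_of_orthogonal_rows hW,
        Pi.sub_apply, Pi.smul_apply, Pi.mul_apply, smul_eq_mul] at hWi
      exact Or.inr ⟨i, mul_right_cancel₀ hi (by linarith)⟩
  · rintro (rfl | ⟨i, rfl⟩)
    · have hmult := eigMult_smul_one_sub_add_card (lam := μ) hs hκ hW
      rw [End.hasEigenvalue_iff]
      intro hbot
      rw [eigMult, hbot, finrank_bot] at hmult
      lia
    · have hWe := mulVec_transpose_mulVec_of_orthogonal_rows hW (Pi.single i 1)
      refine End.hasEigenvalue_of_hasEigenvector (x := Wᵀ *ᵥ Pi.single i 1) ⟨?_, fun h0 => ?_⟩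
      · rw [End.mem_eigenspace_iff, mulVecLin_apply, smul_one_sub_mulVec, hWe, sub_smul,
          ← mulVec_smul _ (κ i * s i)]
        congr 2
        ext j
        by_cases hj : j = i
        · subst hj; simp
        · simp [hj]
      · rw [h0, mulVec_zero] at hWe
        exact hs i (by simpa using (congrFun hWe i).symm)

end OrthogonalRows

section DistinctEigenvectors

variable {ι V : Type*} [Fintype ι] [Fintype V] {M : Matrix V V ℝ} {a : ι → ℝ} {lam μ : ℝ}

theorem dotProduct_eq_zero_of_eigenvectors (hM : M.IsSymm) {x y : V → ℝ}
    (hx : M *ᵥ x = lam • x) (hy : M *ᵥ y = μ • y) (hne : lam ≠ μ) : x ⬝ᵥ y = 0 := by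
  have h : lam * (x ⬝ᵥ y) = μ * (x ⬝ᵥ y) := by
    rw [← smul_eq_mul, ← smul_dotProduct, ← hx, ← smul_eq_mul, ← dotProduct_smul, ← hy,
      dotProduct_mulVec, ← mulVec_transpose, hM.eq]
  exact (mul_eq_mul_right_iff.1 h).resolve_left hne

theorem apply_eq_of_distinct_eigenvectors [DecidableEq V] (hM : M.IsSymm) {w : ι → V → ℝ}
    (hw : ∀ k, M *ᵥ w k = a k • w k) (hw0 : ∀ k, w k ≠ 0) (ha : Function.Injective a)
    (halam : ∀ k, a k ≠ lam) (hmult : eigMult M lam + Fintype.card ι = Fintype.card V) (i j : V) :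
    M i j = (if i = j then lam else 0) -
      ∑ k, (lam - a k) / (w k ⬝ᵥ w k) * (w k i * w k j) := by
  classical
  have horth : of w * (of w)ᵀ = diagonal fun k => w k ⬝ᵥ w k := by
    ext k l
    by_cases hkl : k = l
    · subst hkl
      rw [diagonal_apply_eq]
      rfl
    · rw [diagonal_apply_ne _ hkl]
      exact dotProduct_eq_zero_of_eigenvectors hM (hw k) (hw l) (ha.ne hkl)
  have heig : M * (of w)ᵀ = (of w)ᵀ * diagonal a := by
    ext v k
    rw [mul_diagonal, transpose_apply, of_apply, mul_comm]
    exact congrFun (hw k) v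
  rw [eq_smul_one_sub_of_orthogonal_eigenvector_rows hM
    (fun k => (dotProduct_self_eq_zero.not.2 (hw0 k))) horth heig halam hmult]
  simp only [Matrix.sub_apply, Matrix.smul_apply, one_apply, smul_eq_mul, mul_ite, mul_one,
    mul_zero]
  congr 1
  rw [mul_apply]
  refine Finset.sum_congr rfl fun k _ => ?_
  rw [mul_diagonal, transpose_apply, of_apply, of_apply]
  ring

end DistinctEigenvectors

theorem isGreatest_lambdaMax {V : Type*} [Fintype V] {M : Matrix V V ℝ}
    (hM : {μ : ℝ | Module.End.HasEigenvalue M.mulVecLin μ}.Nonempty) :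
    IsGreatest {μ : ℝ | Module.End.HasEigenvalue M.mulVecLin μ} (lambdaMax M) :=
  have hfin := Module.End.finite_hasEigenvalue M.mulVecLin
  ⟨hM.csSup_mem hfin, fun _ hμ => le_csSup hfin.bddAbove hμ⟩

theorem eq_of_offDiag_eq_of_mulVec_one_eq {V : Type*} [Fintype V] {M N : Matrix V V ℝ}
    (hMN : ∀ i j, i ≠ j → M i j = N i j) (h1 : M *ᵥ 1 = N *ᵥ 1) : M = N := by
  classical
  ext i j
  by_cases hij : i = j
  · subst hij
    have hi := congrFun h1 i
    rw [mulVec, mulVec, dotProduct_one, dotProduct_one,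
      ← Finset.add_sum_erase _ _ (Finset.mem_univ i),
      ← Finset.add_sum_erase _ (N i) (Finset.mem_univ i),
      Finset.sum_congr rfl fun j hj => hMN i j (Finset.ne_of_mem_erase hj).symm] at hi
    exact add_right_cancel hi
  · exact hMN i j hij

section DistLaplacian

open Module

variable {V : Type*} [Fintype V] [DecidableEq V] {G : SimpleGraph V} {μ : ℝ}

theorem distLaplacian_apply_of_ne {i j : V} (hij : i ≠ j) :
    distLaplacian G i j = -(G.dist i j : ℝ) :=
  if_neg hij

theorem distLaplacian_isSymm (G : SimpleGraph V) : (distLaplacian G).IsSymm := by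
  ext i j
  by_cases hij : i = j
  · rw [hij, transpose_apply]
  · rw [transpose_apply, distLaplacian_apply_of_ne hij, distLaplacian_apply_of_ne (Ne.symm hij),
      SimpleGraph.dist_comm]

theorem sum_erase_distLaplacian (G : SimpleGraph V) (i : V) :
    ∑ j ∈ Finset.univ.erase i, distLaplacian G i j = -distLaplacian G i i := by
  rw [distLaplacian, of_apply, if_pos rfl, ← Finset.add_sum_erase _ _ (Finset.mem_univ i),
    SimpleGraph.dist_self, Nat.cast_zero, zero_add, ← Finset.sum_neg_distrib]
  exact Finset.sum_congr rfl fun j hj => if_neg (Finset.ne_of_mem_erase hj).symm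

theorem distLaplacian_mulVec_one (G : SimpleGraph V) : distLaplacian G *ᵥ 1 = 0 := by
  ext i
  rw [mulVec, dotProduct_one, Pi.zero_apply, ← Finset.add_sum_erase _ _ (Finset.mem_univ i),
    sum_erase_distLaplacian, add_neg_cancel]

theorem distLaplacian_eigenvalue_nonneg (hμ : End.HasEigenvalue (distLaplacian G).mulVecLin μ) :
    0 ≤ μ := by
  rw [← toLin'_apply'] at hμ
  obtain ⟨i, hi⟩ := eigenvalue_mem_ball hμ
  have hrad : ∑ j ∈ Finset.univ.erase i, ‖distLaplacian G i j‖ = distLaplacian G i i := by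
    rw [← neg_neg (distLaplacian G i i), ← sum_erase_distLaplacian, ← Finset.sum_neg_distrib]
    refine Finset.sum_congr rfl fun j hj => ?_
    rw [distLaplacian_apply_of_ne (Finset.ne_of_mem_erase hj).symm, norm_neg, neg_neg,
      Real.norm_natCast]
  rw [hrad, Metric.mem_closedBall, Real.dist_eq] at hi
  linarith [neg_abs_le (μ - distLaplacian G i i)]

theorem exists_distinct_eigenvalues_lt_lambdaMax
    (hcard : {μ : ℝ | End.HasEigenvalue (distLaplacian G).mulVecLin μ}.ncard = 4) :
    ∃ a b, a ≠ b ∧ (0 < a ∧ a < lambdaMax (distLaplacian G) ∧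
        End.HasEigenvalue (distLaplacian G).mulVecLin a) ∧
      (0 < b ∧ b < lambdaMax (distLaplacian G) ∧
        End.HasEigenvalue (distLaplacian G).mulVecLin b) := by
  set S := {μ : ℝ | End.HasEigenvalue (distLaplacian G).mulVecLin μ}
  set lam := lambdaMax (distLaplacian G)
  have hmax : IsGreatest S lam := isGreatest_lambdaMax (Set.nonempty_of_ncard_ne_zero (by lia))
  have htwo : 1 < (S \ {0, lam}).ncard := by
    have hpair := Set.ncard_insert_le (0 : ℝ) {lam}
    rw [Set.ncard_singleton] at hpair
    have := Set.le_ncard_sdiff {0, lam} S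
    lia
  obtain ⟨a, b, ⟨ha, ha'⟩, ⟨hb, hb'⟩, hab⟩ :=
    (Set.one_lt_ncard_iff ((End.finite_hasEigenvalue _).sdiff)).1 htwo
  simp only [Set.mem_insert_iff, Set.mem_singleton_iff, not_or] at ha' hb'
  exact ⟨a, b, hab,
    ⟨(distLaplacian_eigenvalue_nonneg ha).lt_of_ne' ha'.1, (hmax.2 ha).lt_of_ne ha'.2, ha⟩,
    ⟨(distLaplacian_eigenvalue_nonneg hb).lt_of_ne' hb'.1, (hmax.2 hb).lt_of_ne hb'.2, hb⟩⟩

end DistLaplacian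

section SecondMoments

open RealInnerProductSpace

variable {V : Type*} [Fintype V]

theorem sum_inner_sq_of_moments {m : ℕ} {x : V → EuclideanSpace ℝ (Fin m)} {σ : Fin m → ℝ}
    (hx : ∀ k l, ∑ v, x v k * x v l = if k = l then σ k else 0) (ξ : EuclideanSpace ℝ (Fin m)) :
    ∑ v, ⟪x v, ξ⟫ ^ 2 = ∑ k, σ k * ξ k ^ 2 := by
  simp only [PiLp.inner_apply, RCLike.inner_apply, conj_trivial, sq, Finset.sum_mul_sum]
  rw [Finset.sum_comm]
  refine Finset.sum_congr rfl fun k _ => ?_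
  rw [Finset.sum_comm]
  calc ∑ l, ∑ v, ξ k * x v k * (ξ l * x v l)
      = ∑ l, ξ k * ξ l * ∑ v, x v k * x v l := by
        refine Finset.sum_congr rfl fun l _ => ?_
        rw [Finset.mul_sum]
        exact Finset.sum_congr rfl fun v _ => by ring
    _ = σ k * (ξ k * ξ k) := by
        simp only [hx, mul_ite, mul_zero, Finset.sum_ite_eq, Finset.mem_univ, if_true]
        ring

theorem exists_inner_ne_zero_of_moments {m : ℕ} {x : V → EuclideanSpace ℝ (Fin m)}
    {σ : Fin m → ℝ} (hσ : ∀ k, 0 < σ k) (hx : ∀ ξ, ∑ v, ⟪x v, ξ⟫ ^ 2 = ∑ k, σ k * ξ k ^ 2)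
    {ξ : EuclideanSpace ℝ (Fin m)} (hξ : ξ ≠ 0) : ∃ v, ⟪x v, ξ⟫ ≠ 0 := by
  obtain ⟨k, hk⟩ : ∃ k, ξ k ≠ 0 := by
    by_contra! hzero
    exact hξ (PiLp.ext hzero)
  have hpos : 0 < ∑ v, ⟪x v, ξ⟫ ^ 2 := hx ξ ▸ Finset.sum_pos'
    (fun l _ => mul_nonneg (hσ l).le (sq_nonneg _))
    ⟨k, Finset.mem_univ k, mul_pos (hσ k) (sq_pos_of_ne_zero hk)⟩
  obtain ⟨v, -, hv⟩ := Finset.exists_ne_zero_of_sum_ne_zero hpos.ne'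
  exact ⟨v, fun h0 => hv (by rw [h0, zero_pow two_ne_zero])⟩

end SecondMoments

section DistRepresentation

open Module RealInnerProductSpace

variable {V E : Type*} [NormedAddCommGroup E] [InnerProductSpace ℝ E]

/-- A distance representation of `G` with constant `c`: vectors indexed by the vertices whose
inner products are the distances shifted by `c`.  The norms of the vectors are left free. -/
def IsDistRepresentation (G : SimpleGraph V) (c : ℝ) (p : V → E) : Prop :=
  ∀ ⦃u v⦄, u ≠ v → ⟪p u, p v⟫ = G.dist u v - c

theorem IsDistRepresentation.one_lt [Fintype V] {G : SimpleGraph V} {c : ℝ}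
    {p : V → E} (hp : IsDistRepresentation G c p) (hG : G.Connected) (hsum : ∑ v, p v = 0)
    {v : V} (hv : p v ≠ 0) : 1 < c := by
  classical
  have hnorm : ⟪p v, p v⟫ = ∑ u ∈ Finset.univ.erase v, (c - G.dist v u) := by
    have hzero : ∑ u, ⟪p v, p u⟫ = 0 := by rw [← inner_sum, hsum, inner_zero_right]
    rw [← Finset.add_sum_erase _ _ (Finset.mem_univ v),
      Finset.sum_congr rfl fun u hu => hp (Finset.ne_of_mem_erase hu).symm] at hzero
    rw [eq_neg_of_add_eq_zero_left hzero, ← Finset.sum_neg_distrib]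
    exact Finset.sum_congr rfl fun u _ => neg_sub _ _
  by_contra! hc
  refine (real_inner_self_pos.2 hv).not_ge (hnorm ▸ Finset.sum_nonpos fun u hu => ?_)
  have hdist : (1 : ℝ) ≤ G.dist v u :=
    mod_cast hG.pos_dist_of_ne (Finset.ne_of_mem_erase hu).symm
  linarith

variable [Fintype V] [DecidableEq V] {G : SimpleGraph V}

theorem dist_sub_eq_sum_of_eigenvectors {m : ℕ} {lam : ℝ} {a : Fin m → ℝ} {w : Fin m → V → ℝ}
    (hw : ∀ k, distLaplacian G *ᵥ w k = a k • w k) (hw0 : ∀ k, w k ≠ 0)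
    (ha : Function.Injective a) (ha0 : ∀ k, a k ≠ 0) (halam : ∀ k, a k ≠ lam) (hlam : lam ≠ 0)
    (hmult : eigMult (distLaplacian G) lam + (m + 1) = Fintype.card V) {u v : V} (huv : u ≠ v) :
    G.dist u v - lam / Fintype.card V =
      ∑ k, (lam - a k) / (w k ⬝ᵥ w k) * (w k u * w k v) := by
  have h := apply_eq_of_distinct_eigenvectors (ι := Fin (m + 1)) (lam := lam)
    (w := Fin.cons 1 w) (a := Fin.cons 0 a) (distLaplacian_isSymm G)
    (Fin.cases ((distLaplacian_mulVec_one G).trans (zero_smul ℝ 1).symm) hw)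
    (Fin.cases (Function.ne_iff.2 ⟨u, one_ne_zero⟩) hw0)
    (Fin.cons_injective_iff.2 ⟨fun ⟨k, hk⟩ => ha0 k hk, ha⟩)
    (Fin.cases hlam.symm halam) (by rwa [Fintype.card_fin]) u v
  rw [distLaplacian_apply_of_ne huv, if_neg huv, zero_sub, neg_inj, Fin.sum_univ_succ] at h
  simp only [Fin.cons_zero, Fin.cons_succ, sub_zero, one_dotProduct_one, Pi.one_apply,
    mul_one] at h
  rw [h, add_sub_cancel_left]

theorem exists_distRepresentation_of_eigenvectors {m : ℕ} {lam : ℝ} {a : Fin m → ℝ}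
    {w : Fin m → V → ℝ} (hw : ∀ k, distLaplacian G *ᵥ w k = a k • w k) (hw0 : ∀ k, w k ≠ 0)
    (ha : Function.Injective a) (ha0 : ∀ k, a k ≠ 0) (hlt : ∀ k, a k < lam) (hlam : lam ≠ 0)
    (hmult : eigMult (distLaplacian G) lam + (m + 1) = Fintype.card V) :
    ∃ p : V → EuclideanSpace ℝ (Fin m),
      IsDistRepresentation G (lam / Fintype.card V) p ∧ ∑ v, p v = 0 ∧
        ∀ ξ, ∑ v, ⟪p v, ξ⟫ ^ 2 = ∑ k, (lam - a k) * ξ k ^ 2 := by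
  let t : Fin m → ℝ := fun k => √((lam - a k) / (w k ⬝ᵥ w k))
  have hww : ∀ k, 0 < w k ⬝ᵥ w k := fun k => by
    simpa using dotProduct_self_star_pos_iff.2 (hw0 k)
  have ht : ∀ k, t k * t k = (lam - a k) / (w k ⬝ᵥ w k) := fun k =>
    Real.mul_self_sqrt (div_nonneg (sub_nonneg.2 (hlt k).le) (hww k).le)
  have hmoment : ∀ k l, ∑ v, (t k * w k v) * (t l * w l v) = if k = l then lam - a k else 0 := by
    intro k l
    have hfactor : ∑ v, (t k * w k v) * (t l * w l v) = t k * t l * (w k ⬝ᵥ w l) := by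
      rw [dotProduct, Finset.mul_sum]
      exact Finset.sum_congr rfl fun v _ => by ring
    split_ifs with hkl
    · rw [hfactor, ← hkl, ht, div_mul_cancel₀ _ (hww k).ne']
    · rw [hfactor, dotProduct_eq_zero_of_eigenvectors (distLaplacian_isSymm G) (hw k) (hw l)
        (ha.ne hkl), mul_zero]
  refine ⟨fun v => WithLp.toLp 2 fun k => t k * w k v, fun u v huv => ?_, ?_, fun ξ => ?_⟩
  · rw [dist_sub_eq_sum_of_eigenvectors hw hw0 ha ha0 (fun k => (hlt k).ne) hlam hmult huv,
      PiLp.inner_apply]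
    refine Finset.sum_congr rfl fun k _ => ?_
    rw [← ht, RCLike.inner_apply, conj_trivial]
    ring
  · ext k
    have hsum : w k ⬝ᵥ 1 = 0 :=
      dotProduct_eq_zero_of_eigenvectors (distLaplacian_isSymm G) (hw k)
        ((distLaplacian_mulVec_one G).trans (zero_smul ℝ 1).symm) (ha0 k)
    rw [dotProduct_one] at hsum
    simp [← Finset.mul_sum, hsum]
  · exact sum_inner_sq_of_moments (x := fun v => WithLp.toLp 2 fun k => t k * w k v) hmoment ξ

theorem exists_planar_distRepresentation (hG : G.Connected)
    (hcard : {μ : ℝ | End.HasEigenvalue (distLaplacian G).mulVecLin μ}.ncard = 4)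
    (hmult : eigMult (distLaplacian G) (lambdaMax (distLaplacian G)) + 3 = Fintype.card V) :
    ∃ c, 1 < c ∧ ∃ p : V → EuclideanSpace ℝ (Fin 2), IsDistRepresentation G c p ∧ ∑ v, p v = 0 ∧
      (∀ ξ ≠ 0, ∃ v, ⟪p v, ξ⟫ ≠ 0) ∧ ¬∃ r, ∀ ξ, ∑ v, ⟪p v, ξ⟫ ^ 2 = r * ‖ξ‖ ^ 2 := by
  obtain ⟨a, b, hab, ⟨ha0, ha, ha'⟩, hb0, hb, hb'⟩ := exists_distinct_eigenvalues_lt_lambdaMax hcard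
  set lam := lambdaMax (distLaplacian G)
  obtain ⟨x, hx⟩ := ha'.exists_hasEigenvector
  obtain ⟨y, hy⟩ := hb'.exists_hasEigenvector
  obtain ⟨p, hp, hsum, hmoment⟩ := exists_distRepresentation_of_eigenvectors (m := 2)
    (a := ![a, b]) (w := ![x, y]) (lam := lam)
    (Fin.forall_fin_two.2 ⟨hx.apply_eq_smul, hy.apply_eq_smul⟩)
    (Fin.forall_fin_two.2 ⟨hx.2, hy.2⟩)
    (by simpa [Function.Injective, Fin.forall_fin_two, eq_comm] using hab)
    (Fin.forall_fin_two.2 ⟨ha0.ne', hb0.ne'⟩) (Fin.forall_fin_two.2 ⟨ha, hb⟩)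
    (ha0.trans ha).ne' hmult
  have hspan : ∀ ξ ≠ 0, ∃ v, ⟪p v, ξ⟫ ≠ 0 := fun ξ hξ =>
    exists_inner_ne_zero_of_moments
      (Fin.forall_fin_two.2 ⟨sub_pos.2 ha, sub_pos.2 hb⟩) hmoment hξ
  obtain ⟨v, hv⟩ := hspan (EuclideanSpace.single 0 1) (by simp)
  refine ⟨_, hp.one_lt hG hsum (fun h0 => hv (by rw [h0, inner_zero_left])), p, hp, hsum, hspan, ?_⟩
  rintro ⟨r, hr⟩
  have h0 : lam - a = r := by simpa [hmoment] using hr (EuclideanSpace.single 0 1)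
  have h1 : lam - b = r := by simpa [hmoment] using hr (EuclideanSpace.single 1 1)
  exact hab (by linarith)

end DistRepresentation

section GraphDistance

open SimpleGraph

variable {V : Type*} {G : SimpleGraph V}

theorem dist_le_two_of_adj_adj {u v w : V} (hu : G.Adj w u) (hv : G.Adj w v) : G.dist u v ≤ 2 :=
  dist_le (.cons hu.symm (.cons hv .nil))

theorem exists_adj_dist_eq_add_one (hG : G.Connected) {u v : V} (huv : u ≠ v) :
    ∃ w, G.Adj u w ∧ G.dist u v = G.dist w v + 1 := by
  obtain ⟨q, hq⟩ := hG.exists_walk_length_eq_dist u v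
  cases q with
  | nil => exact absurd rfl huv
  | @cons _ w _ hadj q =>
    refine ⟨w, hadj, le_antisymm ?_ ?_⟩
    · have htri := hG.dist_triangle (u := u) (v := w) (w := v)
      rw [dist_eq_one_iff_adj.2 hadj] at htri
      lia
    · rw [← hq, Walk.length_cons]
      exact Nat.succ_le_succ (dist_le q)

theorem exists_geodesic_of_three_le_dist (hG : G.Connected) {u v : V} (huv : 3 ≤ G.dist u v) :
    ∃ a b c, G.Adj u a ∧ G.Adj a b ∧ G.Adj b c ∧ G.dist u c = 3 := by
  have hne : ∀ {x}, 0 < G.dist x v → x ≠ v := fun hx h => by simp [h] at hx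
  obtain ⟨a, hua, ha⟩ := exists_adj_dist_eq_add_one hG (hne (x := u) (by lia))
  obtain ⟨b, hab, hb⟩ := exists_adj_dist_eq_add_one hG (hne (x := a) (by lia))
  obtain ⟨c, hbc, hc⟩ := exists_adj_dist_eq_add_one hG (hne (x := b) (by lia))
  refine ⟨a, b, c, hua, hab, hbc, le_antisymm (dist_le (.cons hua (.cons hab (.cons hbc .nil)))) ?_⟩
  have htri := hG.dist_triangle (u := u) (v := c) (w := v)
  lia

theorem dist_eq_two_of_geodesic (hG : G.Connected) {a b c d : V} (hab : G.Adj a b)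
    (hbc : G.Adj b c) (hcd : G.Adj c d) (had : G.dist a d = 3) : G.dist a c = 2 := by
  have htri := hG.dist_triangle (u := a) (v := c) (w := d)
  rw [had, dist_eq_one_iff_adj.2 hcd] at htri
  exact le_antisymm (dist_le_two_of_adj_adj hab.symm hbc) (by lia)

theorem eq_or_eq_of_adj_of_degree_le_two [Fintype V] [DecidableRel G.Adj] {v a b w : V}
    (hdeg : G.degree v ≤ 2) (ha : G.Adj v a) (hb : G.Adj v b) (hab : a ≠ b) (hw : G.Adj v w) :
    w = a ∨ w = b := by
  by_contra! hne
  refine hdeg.not_gt (Finset.two_lt_card.2 ⟨w, ?_, a, ?_, b, ?_, hne.1, hne.2, hab⟩) <;>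
    rwa [mem_neighborFinset]

theorem exists_three_le_dist_of_degree_le_two [Fintype V] [DecidableRel G.Adj] (hG : G.Connected)
    (hdeg : ∀ v, G.degree v ≤ 2) (hcard : 6 ≤ Fintype.card V) : ∃ u v, 3 ≤ G.dist u v := by
  classical
  obtain ⟨v⟩ := hG.nonempty
  by_contra! hdist
  let second := (G.neighborFinset v).biUnion fun w => (G.neighborFinset w).erase v
  have hsecond : second.card ≤ G.degree v * 1 := by
    refine Finset.card_biUnion_le_card_mul _ _ _ fun w hw => ?_
    rw [Finset.card_erase_of_mem (by rwa [mem_neighborFinset, adj_comm, ← mem_neighborFinset]),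
      card_neighborFinset_eq_degree]
    exact Nat.sub_le_sub_right (hdeg w) 1
  have hcover : Finset.univ ⊆ insert v (G.neighborFinset v ∪ second) := by
    intro u _
    by_cases huv : v = u
    · simp [huv]
    obtain ⟨w, hvw, hw⟩ := exists_adj_dist_eq_add_one hG huv
    by_cases hwu : w = u
    · simp [← hwu, hvw]
    · have hpos := hG.pos_dist_of_ne hwu
      have hlt := hdist v u
      have hadj : G.Adj w u := dist_eq_one_iff_adj.1 (by lia)
      have hu : u ∈ second := by
        simpa only [second, Finset.mem_biUnion, mem_neighborFinset, Finset.mem_erase] using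
          ⟨w, hvw, Ne.symm huv, hadj⟩
      exact Finset.mem_insert_of_mem (Finset.mem_union_right _ hu)
  have hle := (Finset.card_le_card hcover).trans (Finset.card_insert_le _ _)
  have hunion := Finset.card_union_le (G.neighborFinset v) second
  rw [card_neighborFinset_eq_degree] at hunion
  rw [Finset.card_univ] at hle
  have := hdeg v
  lia

/- Walking from `b` or from `c` towards `w` has to pass through a neighbour on the path. -/
theorem dist_pattern_of_geodesic (hG : G.Connected) {a b c d w : V} (hab : G.Adj a b)
    (hbc : G.Adj b c) (hcd : G.Adj c d) (hb : ∀ x, G.Adj b x → x = a ∨ x = c)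
    (hc : ∀ x, G.Adj c x → x = b ∨ x = d) (hwb : b ≠ w) (hwc : c ≠ w) :
    (G.dist b w = G.dist a w + 1 ∧ G.dist c w = G.dist a w + 2 ∧ G.dist a w + 1 ≤ G.dist d w) ∨
    (G.dist c w = G.dist d w + 1 ∧ G.dist b w = G.dist d w + 2 ∧ G.dist d w + 1 ≤ G.dist a w) ∨
    (G.dist b w = G.dist a w + 1 ∧ G.dist c w = G.dist a w + 1 ∧ G.dist d w = G.dist a w) := by
  have hstep : ∀ {x y}, G.Adj x y → G.dist x w ≤ G.dist y w + 1 := fun {x y} hxy => by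
    have htri := hG.dist_triangle (u := x) (v := y) (w := w)
    rw [dist_eq_one_iff_adj.2 hxy] at htri
    lia
  have hab' := hstep hab.symm
  have hbc' := hstep hbc
  have hcb' := hstep hbc.symm
  have hcd' := hstep hcd
  obtain ⟨x, hbx, hx⟩ := exists_adj_dist_eq_add_one hG hwb
  obtain ⟨y, hcy, hy⟩ := exists_adj_dist_eq_add_one hG hwc
  obtain rfl | rfl := hb x hbx <;> obtain rfl | rfl := hc y hcy <;> lia

end GraphDistance

section Plane

open Module RealInnerProductSpace

variable {E : Type*} [NormedAddCommGroup E] [InnerProductSpace ℝ E] [Fact (finrank ℝ E = 2)]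

theorem exists_eq_smul_of_orthogonal {q u v : E} (hq : q ≠ 0) (hu : u ≠ 0) (hqu : ⟪q, u⟫ = 0)
    (hqv : ⟪q, v⟫ = 0) : ∃ r : ℝ, v = r • u := by
  have hone : finrank ℝ (ℝ ∙ q)ᗮ = 1 := Submodule.finrank_orthogonal_span_singleton (n := 1) hq
  have hmem : ∀ {x}, ⟪q, x⟫ = 0 → x ∈ (ℝ ∙ q)ᗮ :=
    Submodule.mem_orthogonal_singleton_iff_inner_right.2
  obtain ⟨r, hr⟩ := (finrank_eq_one_iff_of_nonzero' (⟨u, hmem hqu⟩ : (ℝ ∙ q)ᗮ)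
    (by simpa using hu)).1 hone ⟨v, hmem hqv⟩
  exact ⟨r, (congrArg Subtype.val hr).symm⟩

end Plane

section CriticalVertex

open Module RealInnerProductSpace SimpleGraph

namespace IsDistRepresentation

variable {V E : Type*} [NormedAddCommGroup E] [InnerProductSpace ℝ E] {G : SimpleGraph V} {c : ℝ}
  {p : V → E}

theorem inner_of_adj (hp : IsDistRepresentation G c p) {u v : V} (huv : G.Adj u v) :
    ⟪p u, p v⟫ = 1 - c := by
  rw [hp huv.ne, dist_eq_one_iff_adj.2 huv, Nat.cast_one]

theorem ne_zero_of_adj (hp : IsDistRepresentation G c p) (hc : 1 < c) {u v : V}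
    (huv : G.Adj u v) : p u ≠ 0 := fun h0 => by
  have := hp.inner_of_adj huv
  rw [h0, inner_zero_left] at this
  linarith

theorem inner_self_eq_of_twins (hp : IsDistRepresentation G c p) (hG : G.Connected) (hc : 1 < c)
    {u v : V} (huv : u ≠ v) (htwin : p u = p v) : ⟪p u, p u⟫ = 2 - c := by
  obtain ⟨w, huw, hw⟩ := exists_adj_dist_eq_add_one hG huv
  have hself : ⟪p u, p u⟫ = G.dist u v - c := by rw [← hp huv, htwin]
  by_cases hwv : w = v
  · subst hwv
    rw [dist_self, zero_add] at hw
    rw [hw, Nat.cast_one] at hself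
    linarith [real_inner_self_nonneg (x := p u)]
  · have hdist : (G.dist w v : ℝ) - c = 1 - c := by
      rw [← hp hwv, ← htwin, real_inner_comm, hp.inner_of_adj huw]
    have hone : G.dist w v = 1 := by exact_mod_cast sub_left_injective hdist
    rw [hself, hw, hone]
    norm_num

variable [Fact (finrank ℝ E = 2)]

theorem exists_inner_self_eq_of_equidistant_neighbors (hp : IsDistRepresentation G c p)
    (hG : G.Connected) (hc : 1 < c) {w u v v' : V} (hu : G.Adj w u) (hv : G.Adj w v)
    (hv' : G.Adj w v') (huv : u ≠ v) (huv' : u ≠ v') (hvv' : v ≠ v')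
    (heq : G.dist u v = G.dist u v') : ∃ m, ⟪p m, p m⟫ = 2 - c := by
  by_cases htwin : p v = p v'
  · exact ⟨v, hp.inner_self_eq_of_twins hG hc hvv' htwin⟩
  obtain ⟨r, hr⟩ := exists_eq_smul_of_orthogonal (v := p u) (sub_ne_zero.2 htwin)
    (hp.ne_zero_of_adj hc hu)
    (by rw [inner_sub_left, hp.inner_of_adj hv.symm, hp.inner_of_adj hv'.symm, sub_self])
    (by rw [inner_sub_left, hp huv.symm, hp huv'.symm, dist_comm, heq, dist_comm, sub_self])
  have hru : r * ⟪p w, p w⟫ = 1 - c := by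
    rw [← hp.inner_of_adj hu.symm, hr, real_inner_smul_left]
  have hrv : r * (1 - c) = G.dist u v - c := by
    rw [← hp huv, hr, real_inner_smul_left, hp.inner_of_adj hv]
  have hneg : r < 0 := by
    by_contra! hnn
    linarith [mul_nonneg hnn (real_inner_self_nonneg (x := p w))]
  have hgt : (1 : ℝ) < G.dist u v := by
    linarith [mul_pos_of_neg_of_neg hneg (sub_neg.2 hc)]
  have htwo : G.dist u v = 2 :=
    le_antisymm (dist_le_two_of_adj_adj hu hv) (by exact_mod_cast hgt)
  refine ⟨u, ?_⟩
  nth_rewrite 1 [hr]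
  rw [real_inner_smul_left, hp.inner_of_adj hu, hrv, htwo, Nat.cast_ofNat]

theorem exists_inner_self_eq_of_two_lt_degree [Fintype V] [DecidableRel G.Adj]
    (hp : IsDistRepresentation G c p) (hG : G.Connected) (hc : 1 < c) {w : V}
    (hw : 2 < G.degree w) : ∃ m, ⟪p m, p m⟫ = 2 - c := by
  obtain ⟨x, hx, y, hy, z, hz, hxy, hxz, hyz⟩ := Finset.two_lt_card.1 hw
  rw [mem_neighborFinset] at hx hy hz
  have hpos : ∀ {a b}, a ≠ b → 0 < G.dist a b := hG.pos_dist_of_ne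
  have hpigeon : G.dist x y = G.dist x z ∨ G.dist y x = G.dist y z ∨ G.dist z x = G.dist z y := by
    have := hpos hxy
    have := hpos hxz
    have := hpos hyz
    have := dist_le_two_of_adj_adj hx hy
    have := dist_le_two_of_adj_adj hx hz
    have := dist_le_two_of_adj_adj hy hz
    rw [dist_comm (u := y) (v := x), dist_comm (u := z) (v := x), dist_comm (u := z) (v := y)]
    lia
  obtain h | h | h := hpigeon
  · exact hp.exists_inner_self_eq_of_equidistant_neighbors hG hc hx hy hz hxy hxz hyz h
  · exact hp.exists_inner_self_eq_of_equidistant_neighbors hG hc hy hx hz hxy.symm hyz hxz h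
  · exact hp.exists_inner_self_eq_of_equidistant_neighbors hG hc hz hx hy hxz.symm hyz.symm hxy h

/- The second difference `p a - 2 • p b + p e` is orthogonal to both `p d` and `p w`. -/
theorem not_dist_pattern_increasing (hp : IsDistRepresentation G c p) (hG : G.Connected)
    (hc : 1 < c) {a b e d w : V} (hab : G.Adj a b) (hbe : G.Adj b e) (hed : G.Adj e d)
    (had : G.dist a d = 3) (hwa : w ≠ a) (hwb : w ≠ b) (hwe : w ≠ e)
    (hwd : w ≠ d) (hb : G.dist b w = G.dist a w + 1) (he : G.dist e w = G.dist a w + 2) :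
    ¬G.dist a w + 1 ≤ G.dist d w := by
  intro hd
  have hdb' : G.dist d b = 2 :=
    dist_eq_two_of_geodesic hG hed.symm hbe.symm hab.symm (by rw [SimpleGraph.dist_comm, had])
  have hne : ∀ {x y}, 0 < G.dist x y → x ≠ y := fun hx h => by simp [h] at hx
  have hda : ⟪p d, p a⟫ = 3 - c := by rw [hp (hne (by lia)).symm, dist_comm, had]; norm_num
  have hdb : ⟪p d, p b⟫ = 2 - c := by rw [hp (hne (by lia)), hdb']; norm_num
  have hde := hp.inner_of_adj hed.symm
  have hwa' : ⟪p w, p a⟫ = G.dist a w - c := by rw [hp hwa, dist_comm]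
  have hwb' : ⟪p w, p b⟫ = G.dist a w + 1 - c := by rw [hp hwb, dist_comm, hb]; push_cast; ring
  have hwe' : ⟪p w, p e⟫ = G.dist a w + 2 - c := by rw [hp hwe, dist_comm, he]; push_cast; ring
  have hq : p a - (2 : ℝ) • p b + p e ≠ 0 := fun h0 => by
    have hqb := congrArg (⟪·, p b⟫) h0
    simp only [inner_add_left, inner_sub_left, real_inner_smul_left, inner_zero_left,
      hp.inner_of_adj hab, hp.inner_of_adj hbe.symm] at hqb
    linarith [real_inner_self_nonneg (x := p b)]
  obtain ⟨r, hr⟩ := exists_eq_smul_of_orthogonal (v := p w) hq (hp.ne_zero_of_adj hc hed.symm)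
    (by rw [real_inner_comm, inner_add_right, inner_sub_right, real_inner_smul_right]; linarith)
    (by rw [real_inner_comm, inner_add_right, inner_sub_right, real_inner_smul_right]; linarith)
  have hra : r * (3 - c) = G.dist a w - c := by rw [← hda, ← hwa', hr, real_inner_smul_left]
  have hrb : r * (2 - c) = G.dist a w + 1 - c := by rw [← hdb, ← hwb', hr, real_inner_smul_left]
  have hr1 : r = -1 := by linarith
  have hwd' : (G.dist d w : ℝ) < c := by
    have hself : ⟪p w, p d⟫ = -⟪p d, p d⟫ := by rw [hr, hr1, real_inner_smul_left, neg_one_mul]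
    rw [hp hwd, dist_comm] at hself
    linarith [real_inner_self_pos.2 (hp.ne_zero_of_adj hc hed.symm)]
  have hd' : (G.dist a w : ℝ) + 1 ≤ G.dist d w := by exact_mod_cast hd
  have hpos : (1 : ℝ) ≤ G.dist a w := mod_cast hG.pos_dist_of_ne hwa.symm
  rw [hr1] at hra
  linarith

theorem eq_of_dist_pattern_symmetric (hp : IsDistRepresentation G c p) {a b e w w' : V}
    (hbe : p b ≠ p e) (hwa : w ≠ a) (hwb : w ≠ b) (hwe : w ≠ e) (hwa' : w' ≠ a) (hwb' : w' ≠ b)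
    (hwe' : w' ≠ e) (hb : G.dist b w = G.dist a w + 1) (he : G.dist e w = G.dist a w + 1)
    (hb' : G.dist b w' = G.dist a w' + 1) (he' : G.dist e w' = G.dist a w' + 1) : p w = p w' := by
  by_contra hne
  have hab : ∀ {x}, x ≠ a → x ≠ b → G.dist b x = G.dist a x + 1 → ⟪p x, p a - p b⟫ = -1 := by
    intro x ha hb h
    rw [inner_sub_right, hp ha, hp hb, dist_comm, dist_comm (v := b), h]
    push_cast
    ring
  have heq : ∀ {x}, x ≠ b → x ≠ e → G.dist b x = G.dist a x + 1 → G.dist e x = G.dist a x + 1 →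
      ⟪p x, p b - p e⟫ = 0 := by
    intro x hb he h h'
    rw [inner_sub_right, hp hb, hp he, dist_comm, dist_comm (v := e), h, h', sub_self]
  have hw := hab hwa hwb hb
  obtain ⟨r, hr⟩ := exists_eq_smul_of_orthogonal (u := p a - p b) (v := p b - p e)
    (sub_ne_zero.2 hne) (fun h0 => by rw [h0, inner_zero_right] at hw; linarith)
    (by rw [inner_sub_left, hw, hab hwa' hwb' hb', sub_self])
    (by rw [inner_sub_left, heq hwb hwe hb he, heq hwb' hwe' hb' he', sub_self])
  have hr0 : r = 0 := by
    have h := heq hwb hwe hb he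
    rw [hr, real_inner_smul_right, hw] at h
    linarith
  exact hbe (sub_eq_zero.1 (by rw [hr, hr0, zero_smul]))

theorem exists_inner_self_eq_of_geodesic [Fintype V] (hp : IsDistRepresentation G c p)
    (hG : G.Connected) (hc : 1 < c) (hcard : 6 ≤ Fintype.card V) {a b e d : V} (hab : G.Adj a b)
    (hbe : G.Adj b e) (hed : G.Adj e d) (had : G.dist a d = 3)
    (hb : ∀ x, G.Adj b x → x = a ∨ x = e) (he : ∀ x, G.Adj e x → x = b ∨ x = d) :
    ∃ m, ⟪p m, p m⟫ = 2 - c := by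
  classical
  have hout : ∀ w ∉ ({a, b, e, d} : Finset V), (w ≠ a ∧ w ≠ b ∧ w ≠ e) ∧
      G.dist b w = G.dist a w + 1 ∧ G.dist e w = G.dist a w + 1 := by
    intro w hw
    simp only [Finset.mem_insert, Finset.mem_singleton, not_or] at hw
    obtain ⟨hwa, hwb, hwe, hwd⟩ := hw
    refine ⟨⟨hwa, hwb, hwe⟩, ?_⟩
    obtain ⟨h1, h2, h3⟩ | ⟨h1, h2, h3⟩ | ⟨h1, h2, -⟩ :=
      dist_pattern_of_geodesic hG hab hbe hed hb he (Ne.symm hwb) (Ne.symm hwe)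
    · exact absurd h3
        (hp.not_dist_pattern_increasing hG hc hab hbe hed had hwa hwb hwe hwd h1 h2)
    · exact absurd h3 (hp.not_dist_pattern_increasing hG hc hed.symm hbe.symm hab.symm
        (by rw [SimpleGraph.dist_comm, had]) hwd hwe hwb hwa h1 h2)
    · exact ⟨h1, h2⟩
  have htwo : 1 < ({a, b, e, d} : Finset V)ᶜ.card := by
    have := Finset.card_le_four (a := a) (b := b) (c := e) (d := d)
    rw [Finset.card_compl]
    lia
  obtain ⟨w, hw, w', hw', hne⟩ := Finset.one_lt_card.1 htwo
  obtain ⟨⟨hwa, hwb, hwe⟩, h1, h2⟩ := hout w (Finset.mem_compl.1 hw)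
  obtain ⟨⟨hwa', hwb', hwe'⟩, h1', h2'⟩ := hout w' (Finset.mem_compl.1 hw')
  by_cases htwin : p b = p e
  · exact ⟨b, hp.inner_self_eq_of_twins hG hc hbe.ne htwin⟩
  · exact ⟨w, hp.inner_self_eq_of_twins hG hc hne
      (hp.eq_of_dist_pattern_symmetric htwin hwa hwb hwe hwa' hwb' hwe' h1 h2 h1' h2')⟩

theorem exists_inner_self_eq_two_sub [Fintype V] (hp : IsDistRepresentation G c p)
    (hG : G.Connected) (hc : 1 < c) (hcard : 6 ≤ Fintype.card V) : ∃ m, ⟪p m, p m⟫ = 2 - c := by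
  classical
  by_cases hdeg : ∃ w, 2 < G.degree w
  · obtain ⟨w, hw⟩ := hdeg
    exact hp.exists_inner_self_eq_of_two_lt_degree hG hc hw
  push Not at hdeg
  obtain ⟨u, v, huv⟩ := exists_three_le_dist_of_degree_le_two hG hdeg hcard
  obtain ⟨b, e, d, hub, hbe, hed, hud⟩ := exists_geodesic_of_three_le_dist hG huv
  have hue : u ≠ e := by
    rintro rfl
    rw [dist_eq_one_iff_adj.2 hed] at hud
    lia
  have hbd : b ≠ d := by
    rintro rfl
    rw [dist_eq_one_iff_adj.2 hub] at hud
    lia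
  exact hp.exists_inner_self_eq_of_geodesic hG hc hcard hub hbe hed hud
    (fun _ => eq_or_eq_of_adj_of_degree_le_two (hdeg b) hub.symm hbe hue)
    (fun _ => eq_or_eq_of_adj_of_degree_le_two (hdeg e) hbe.symm hed hbd)

end IsDistRepresentation

end CriticalVertex

section Biclique

open SimpleGraph

variable {V : Type*} {G : SimpleGraph V} {A : Finset V}

/-- The complete bipartite graph with parts `A` and `Aᶜ`.  A graph is the join of its parts on `A`
and `Aᶜ` exactly when it contains `biclique A`. -/
def biclique (A : Finset V) : SimpleGraph V where
  Adj i j := ¬(i ∈ A ↔ j ∈ A)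
  symm := ⟨fun _ _ h h' => h h'.symm⟩
  loopless := ⟨fun _ h => h Iff.rfl⟩

theorem biclique_adj {i j : V} : (biclique A).Adj i j ↔ ¬(i ∈ A ↔ j ∈ A) := Iff.rfl

theorem biclique_compl [Fintype V] [DecidableEq V] (A : Finset V) : biclique Aᶜ = biclique A := by
  ext i j
  simp only [biclique_adj, Finset.mem_compl]
  tauto

theorem biclique_le_iff : biclique A ≤ G ↔ ∀ i ∈ A, ∀ j ∉ A, G.Adj i j := by
  refine ⟨fun h i hi j hj => h (biclique_adj.2 (by tauto)), fun h i j hij => ?_⟩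
  by_cases hi : i ∈ A
  · exact h i hi j fun hj => hij (by tauto)
  · exact (h j (by_contra fun hj => hij (by tauto)) i hi).symm

theorem connected_of_biclique_le (hA : biclique A ≤ G) {a b : V} (ha : a ∈ A) (hb : b ∉ A) :
    G.Connected := by
  rw [biclique_le_iff] at hA
  have hreach : ∀ v, G.Reachable a v := fun v => by
    by_cases hv : v ∈ A
    · exact (hA a ha b hb).reachable.trans (hA v hv b hb).symm.reachable
    · exact (hA a ha v hv).reachable
  exact connected_iff_exists_forall_reachable G |>.2 ⟨a, hreach⟩

theorem dist_of_biclique_le (hA : biclique A ≤ G) {a b : V} (ha : a ∈ A) (hb : b ∉ A) {i j : V}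
    (hij : i ≠ j) [Decidable (G.Adj i j)] : G.dist i j = if G.Adj i j then 1 else 2 := by
  split_ifs with hadj
  · exact dist_eq_one_iff_adj.2 hadj
  refine le_antisymm ?_
    ((connected_of_biclique_le hA ha hb).one_lt_dist_of_ne_of_not_adj hij hadj)
  rw [biclique_le_iff] at hA
  by_cases hi : i ∈ A <;> by_cases hj : j ∈ A
  · exact dist_le_two_of_adj_adj (hA i hi b hb).symm (hA j hj b hb).symm
  · exact absurd (hA i hi j hj) hadj
  · exact absurd (hA j hj i hi).symm hadj
  · exact dist_le_two_of_adj_adj (hA a ha i hi) (hA a ha j hj)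

theorem eq_biclique (hA : biclique A ≤ G) (hin : ∀ i ∈ A, ∀ j ∈ A, ¬G.Adj i j)
    (hout : ∀ i ∉ A, ∀ j ∉ A, ¬G.Adj i j) : G = biclique A := by
  refine le_antisymm (fun i j hij h => ?_) hA
  by_cases hi : i ∈ A
  · exact hin i hi j (h.1 hi) hij
  · exact hout i hi j (fun hj => hi (h.2 hj)) hij

theorem eq_biclique_sup_edge (hA : biclique A ≤ G) {u v : V} (huv : G.Adj u v)
    (hin : ∀ i ∈ A, ∀ j ∈ A, G.Adj i j → (edge u v).Adj i j)
    (hout : ∀ i ∉ A, ∀ j ∉ A, ¬G.Adj i j) : G = biclique A ⊔ edge u v := by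
  refine le_antisymm (fun i j hij => ?_) (sup_le hA ((edge_le_iff G).2 (Or.inr huv)))
  rw [sup_adj, biclique_adj]
  by_cases hi : i ∈ A <;> by_cases hj : j ∈ A
  · exact Or.inr (hin i hi j hj hij)
  · exact Or.inl fun h => hj (h.1 hi)
  · exact Or.inl fun h => hi (h.2 hj)
  · exact absurd hij (hout i hi j hj)

end Biclique

section Join

open RealInnerProductSpace SimpleGraph Finset

namespace IsDistRepresentation

variable {V E : Type*} [NormedAddCommGroup E] [InnerProductSpace ℝ E] [Fintype V]
  {G : SimpleGraph V} {c : ℝ} {p : V → E}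

theorem inner_sub_sum_sub [DecidableEq V] (hp : IsDistRepresentation G c p) (hsum : ∑ v, p v = 0)
    {m : V} (hm : ⟪p m, p m⟫ = 2 - c) {A : Finset V} (hA : ∀ i ∉ A, G.Adj m i) {q : V}
    (hq : q ∈ A) (hqm : q ≠ m) : ⟪p q - p m, ∑ a ∈ A, (p a - p m)⟫ =
      -(#A * ((G.dist q m : ℝ) - 2) + ∑ i ∈ Aᶜ, ((G.dist q i : ℝ) - 1)) := by
  have hi : ∀ i ∈ Aᶜ, ⟪p q - p m, p i⟫ = (G.dist q i : ℝ) - 1 := fun i hi => by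
    have hqi : q ≠ i := ne_of_mem_of_not_mem hq (mem_compl.1 hi)
    rw [inner_sub_left, hp hqi, hp.inner_of_adj (hA i (mem_compl.1 hi))]
    ring
  rw [sum_sub_distrib, sum_const, ← Nat.cast_smul_eq_nsmul ℝ,
    eq_neg_of_add_eq_zero_left ((sum_add_sum_compl A p).trans hsum), inner_sub_right,
    inner_neg_right, inner_sum, sum_congr rfl hi, inner_smul_right, inner_sub_left, hp hqm, hm]
  ring

/- The terms of `‖∑ q ∈ A, (p q - p m)‖² = ∑ q ∈ A, ⟪p q - p m, ∑ a ∈ A, (p a - p m)⟫` are minus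
sums of the excesses of `d(q,m)` over `2` and of the `d(q,i)` over `1`, so all of them vanish. -/
theorem biclique_le_and_sum_eq (hp : IsDistRepresentation G c p) (hG : G.Connected)
    (hsum : ∑ v, p v = 0) {m : V} (hm : ⟪p m, p m⟫ = 2 - c) {A : Finset V}
    (hA : ∀ i, i ∈ A ↔ ¬G.Adj m i) : biclique A ≤ G ∧ ∑ i ∈ A, p i = (#A : ℝ) • p m := by
  classical
  have hmadj : ∀ i ∉ A, G.Adj m i := fun i hi => not_not.1 ((hA i).not.1 hi)
  set ξ := ∑ a ∈ A, (p a - p m) with hξ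
  have hterm : ∀ q ∈ A, q ≠ m → ⟪p q - p m, ξ⟫ =
      -(#A * ((G.dist q m : ℝ) - 2) + ∑ i ∈ Aᶜ, ((G.dist q i : ℝ) - 1)) :=
    fun q => hp.inner_sub_sum_sub hsum hm hmadj
  have htwo : ∀ q ∈ A, q ≠ m → (0 : ℝ) ≤ #A * ((G.dist q m : ℝ) - 2) := fun q hq hqm =>
    mul_nonneg (Nat.cast_nonneg _) <| sub_nonneg.2 <| mod_cast
      hG.one_lt_dist_of_ne_of_not_adj hqm fun h => (hA q).1 hq h.symm
  have hone : ∀ q ∈ A, ∀ i ∈ Aᶜ, (0 : ℝ) ≤ G.dist q i - 1 := fun q hq i hi =>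
    sub_nonneg.2 <| mod_cast
      hG.pos_dist_of_ne (ne_of_mem_of_not_mem hq (mem_compl.1 hi))
  have hξ0 : ξ = 0 := by
    refine (inner_self_eq_zero (𝕜 := ℝ)).1 (le_antisymm ?_ real_inner_self_nonneg)
    nth_rewrite 1 [hξ]
    rw [sum_inner]
    refine sum_nonpos fun q hq => ?_
    by_cases hqm : q = m
    · rw [hqm, sub_self, inner_zero_left]
    · rw [hterm q hq hqm, neg_nonpos]
      exact add_nonneg (htwo q hq hqm) (sum_nonneg (hone q hq))
  refine ⟨biclique_le_iff.2 fun q hq i hi => ?_, ?_⟩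
  · by_cases hqm : q = m
    · exact hqm ▸ hmadj i hi
    have hzero := hterm q hq hqm
    rw [hξ0, inner_zero_right, eq_comm, neg_eq_zero, add_eq_zero_iff_of_nonneg (htwo q hq hqm)
      (sum_nonneg (hone q hq)), sum_eq_zero_iff_of_nonneg (hone q hq)] at hzero
    have hqi := hzero.2 i (mem_compl.2 hi)
    rw [sub_eq_zero, Nat.cast_eq_one] at hqi
    exact dist_eq_one_iff_adj.1 hqi
  · rwa [hξ, sum_sub_distrib, sum_const, sub_eq_zero, ← Nat.cast_smul_eq_nsmul ℝ] at hξ0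

end IsDistRepresentation

end Join

section PlaneFrame

open Module RealInnerProductSpace

variable {E : Type*} [NormedAddCommGroup E] [InnerProductSpace ℝ E] [Fact (finrank ℝ E = 2)]

theorem exists_orthogonal_norm_eq_one {m : E} (hm : m ≠ 0) : ∃ ξ : E, ⟪m, ξ⟫ = 0 ∧ ‖ξ‖ = 1 := by
  have hone : finrank ℝ (ℝ ∙ m)ᗮ = 1 := Submodule.finrank_orthogonal_span_singleton (n := 1) hm
  have : Nontrivial (ℝ ∙ m)ᗮ := nontrivial_of_finrank_pos (R := ℝ) (by lia)
  obtain ⟨ξ, hξ⟩ := exists_norm_eq (ℝ ∙ m)ᗮ zero_le_one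
  exact ⟨ξ, Submodule.mem_orthogonal_singleton_iff_inner_right.1 ξ.2, hξ⟩

theorem inner_eq_of_orthogonal_frame {m ξ : E} (hm : m ≠ 0) (hmξ : ⟪m, ξ⟫ = 0) (hξ : ‖ξ‖ = 1)
    (a b : E) : ⟪a, b⟫ = ⟪a, m⟫ * ⟪b, m⟫ / ⟪m, m⟫ + ⟪a, ξ⟫ * ⟪b, ξ⟫ := by
  have hmm : ⟪m, m⟫ ≠ 0 := inner_self_eq_zero.not.2 hm
  obtain ⟨r, hr⟩ := exists_eq_smul_of_orthogonal (v := b - (⟪b, m⟫ / ⟪m, m⟫) • m) hm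
    (norm_ne_zero_iff.1 (hξ ▸ one_ne_zero)) hmξ (by
      rw [inner_sub_right, inner_smul_right, div_mul_cancel₀ _ hmm, real_inner_comm, sub_self])
  have hb : b = (⟪b, m⟫ / ⟪m, m⟫) • m + r • ξ := by rw [← hr, add_sub_cancel]
  have hbξ : ⟪b, ξ⟫ = r := by
    rw [hb, inner_add_left, real_inner_smul_left, real_inner_smul_left, hmξ,
      real_inner_self_eq_norm_sq ξ, hξ]
    ring
  nth_rewrite 1 [hb]
  rw [inner_add_right, inner_smul_right, inner_smul_right, hbξ]
  ring

theorem sum_inner_sq_of_orthogonal_frame {V : Type*} [Fintype V] {p : V → E} {m ξ : E} {r : ℝ}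
    (hm : m ≠ 0) (hmξ : ⟪m, ξ⟫ = 0) (hξ : ‖ξ‖ = 1) (hpm : ∑ v, ⟪p v, m⟫ ^ 2 = r * ⟪m, m⟫)
    (hpmξ : ∑ v, ⟪p v, m⟫ * ⟪p v, ξ⟫ = 0) (hpξ : ∑ v, ⟪p v, ξ⟫ ^ 2 = r) (ζ : E) :
    ∑ v, ⟪p v, ζ⟫ ^ 2 = r * ‖ζ‖ ^ 2 := by
  have hmm : ⟪m, m⟫ ≠ 0 := inner_self_eq_zero.not.2 hm
  have hframe := inner_eq_of_orthogonal_frame hm hmξ hξ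
  calc ∑ v, ⟪p v, ζ⟫ ^ 2
      = ∑ v, ((⟪ζ, m⟫ / ⟪m, m⟫) ^ 2 * ⟪p v, m⟫ ^ 2 +
          2 * (⟪ζ, m⟫ / ⟪m, m⟫) * ⟪ζ, ξ⟫ * (⟪p v, m⟫ * ⟪p v, ξ⟫) +
            ⟪ζ, ξ⟫ ^ 2 * ⟪p v, ξ⟫ ^ 2) :=
        Finset.sum_congr rfl fun v _ => by rw [hframe (p v) ζ]; ring
    _ = (⟪ζ, m⟫ / ⟪m, m⟫) ^ 2 * (r * ⟪m, m⟫) + ⟪ζ, ξ⟫ ^ 2 * r := by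
        rw [Finset.sum_add_distrib, Finset.sum_add_distrib, ← Finset.mul_sum, ← Finset.mul_sum,
          ← Finset.mul_sum, hpm, hpmξ, hpξ, mul_zero, add_zero]
    _ = r * ‖ζ‖ ^ 2 := by
        rw [← real_inner_self_eq_norm_sq, hframe ζ ζ]
        field_simp

end PlaneFrame

section JoinCoordinate

open Module RealInnerProductSpace SimpleGraph Finset

variable {V : Type*} {G : SimpleGraph V}

/-- The coordinate that remains when a planar distance representation with constant `c = 2 - y`
of a graph `G` containing `biclique A` is projected orthogonally to the vector `p m` of squared
norm `y` that is the mean of the vectors of `A`.  The last field records that the representation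
stretches the plane differently along the two directions. -/
structure IsJoinCoordinate [Fintype V] (G : SimpleGraph V) (A : Finset V) (y : ℝ) (s : V → ℝ) :
    Prop where
  mul_of_mem : ∀ i ∈ A, ∀ j ∈ A, i ≠ j → s i * s j = G.dist i j - 2
  mul_of_notMem : ∀ i ∉ A, ∀ j ∉ A, i ≠ j → y * (s i * s j) = y * G.dist i j - 1
  mul_of_mem_of_notMem : ∀ i ∈ A, ∀ j ∉ A, s i * s j = 0
  sum_mem : ∑ i ∈ A, s i = 0
  sum_univ : ∑ i, s i = 0
  exists_ne_zero : ∃ i, s i ≠ 0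
  card_eq : (#A : ℝ) = (1 - y) * Fintype.card V
  sum_sq_ne : ∑ i, s i ^ 2 ≠ #A

namespace IsDistRepresentation

variable {E : Type*} [NormedAddCommGroup E] [InnerProductSpace ℝ E] {c : ℝ} {p : V → E} {m : V}
  {A : Finset V}

theorem inner_eq_of_biclique_le [DecidableEq V] (hp : IsDistRepresentation G c p)
    (hm : ⟪p m, p m⟫ = 2 - c) (hA : biclique A ≤ G) (hmadj : ∀ i, i ∈ A ↔ ¬G.Adj m i) {b : V}
    (hb : b ∉ A) (i : V) : ⟪p i, p m⟫ = 1 - c + if i ∈ A then 1 else 0 := by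
  classical
  split_ifs with hi
  · by_cases him : i = m
    · rw [him, hm]
      ring
    · rw [hp him, dist_of_biclique_le hA ((hmadj m).2 G.irrefl) hb him,
        if_neg fun h => (hmadj i).1 hi h.symm]
      push_cast
      ring
  · rw [hp.inner_of_adj (not_not.1 ((hmadj i).not.1 hi)).symm, add_zero]

theorem isJoinCoordinate [Fintype V] [Fact (finrank ℝ E = 2)] (hp : IsDistRepresentation G c p)
    (hsum : ∑ v, p v = 0) (hspan : ∀ ξ ≠ 0, ∃ v, ⟪p v, ξ⟫ ≠ 0)
    (haniso : ¬∃ r, ∀ ξ, ∑ v, ⟪p v, ξ⟫ ^ 2 = r * ‖ξ‖ ^ 2) (hm0 : p m ≠ 0)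
    (hm : ⟪p m, p m⟫ = 2 - c) (hA : biclique A ≤ G) (hmadj : ∀ i, i ∈ A ↔ ¬G.Adj m i) {b : V}
    (hb : b ∉ A) (hAsum : ∑ i ∈ A, p i = (#A : ℝ) • p m) {ξ : E} (hmξ : ⟪p m, ξ⟫ = 0)
    (hξ : ‖ξ‖ = 1) : IsJoinCoordinate G A (2 - c) fun i => ⟪p i, ξ⟫ := by
  classical
  have hy : 2 - c ≠ 0 := hm ▸ inner_self_eq_zero.not.2 hm0
  have ht := hp.inner_eq_of_biclique_le hm hA hmadj hb
  have hprod (i j) : ⟪p i, ξ⟫ * ⟪p j, ξ⟫ = ⟪p i, p j⟫ - ⟪p i, p m⟫ * ⟪p j, p m⟫ / (2 - c) := by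
    rw [inner_eq_of_orthogonal_frame hm0 hmξ hξ (p i) (p j), hm, add_sub_cancel_left]
  have hAξ : ∑ i ∈ A, ⟪p i, ξ⟫ = 0 := by
    rw [← sum_inner, hAsum, real_inner_smul_left, hmξ, mul_zero]
  have hsumξ (ζ : E) : ∑ i, ⟪p i, ζ⟫ = 0 := by rw [← sum_inner, hsum, inner_zero_left]
  have hcard : (#A : ℝ) = (1 - (2 - c)) * Fintype.card V := by
    have htsum := hsumξ (p m)
    simp only [ht, sum_add_distrib, sum_const, nsmul_eq_mul, sum_ite_mem, univ_inter,
      card_univ] at htsum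
    linear_combination htsum
  have hsq : ∑ i, ⟪p i, p m⟫ ^ 2 = #A * ⟪p m, p m⟫ := by
    have hi (i) : ⟪p i, p m⟫ ^ 2 = (1 - c) ^ 2 + if i ∈ A then 3 - 2 * c else 0 := by
      rw [ht]
      split_ifs <;> ring
    simp only [hi, sum_add_distrib, sum_const, nsmul_eq_mul, sum_ite_mem, univ_inter, card_univ, hm]
    linear_combination (1 - c) * hcard
  have hmixed : ∑ i, ⟪p i, p m⟫ * ⟪p i, ξ⟫ = 0 := by
    simp only [ht, add_mul, ite_mul, one_mul, zero_mul, sum_add_distrib, ← mul_sum, hsumξ,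
      sum_ite_mem, univ_inter, hAξ, mul_zero, add_zero]
  refine ⟨fun i hi j hj hij => ?_, fun i hi j hj hij => ?_, fun i hi j hj => ?_, hAξ, hsumξ ξ,
    hspan ξ (norm_ne_zero_iff.1 (hξ ▸ one_ne_zero)), hcard, fun hξsq =>
      haniso ⟨#A, sum_inner_sq_of_orthogonal_frame hm0 hmξ hξ hsq hmixed hξsq⟩⟩
  · rw [hprod, hp hij, ht, ht, if_pos hi, if_pos hj]
    field_simp
    ring
  · rw [hprod, hp hij, ht, ht, if_neg hi, if_neg hj]
    field_simp
    ring
  · rw [hprod, hp.inner_of_adj (biclique_le_iff.1 hA i hi j hj), ht, ht, if_pos hi, if_neg hj]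
    field_simp
    ring

end IsDistRepresentation

theorem exists_isJoinCoordinate [Fintype V] [DecidableEq V] (hG : G.Connected)
    (hn : 6 ≤ Fintype.card V)
    (hcard : {μ : ℝ | End.HasEigenvalue (distLaplacian G).mulVecLin μ}.ncard = 4)
    (hmult : eigMult (distLaplacian G) (lambdaMax (distLaplacian G)) + 3 = Fintype.card V) :
    ∃ A : Finset V, ∃ y s, (∃ a, a ∈ A) ∧ (∃ b, b ∉ A) ∧ biclique A ≤ G ∧ 0 < y ∧ y < 1 ∧
      IsJoinCoordinate G A y s := by
  classical
  have : Fact (finrank ℝ (EuclideanSpace ℝ (Fin 2)) = 2) := ⟨finrank_euclideanSpace_fin⟩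
  obtain ⟨c, hc, p, hp, hsum, hspan, haniso⟩ := exists_planar_distRepresentation hG hcard hmult
  obtain ⟨m, hm⟩ := hp.exists_inner_self_eq_two_sub hG hc hn
  have : Nontrivial V := Fintype.one_lt_card_iff_nontrivial.1 (by lia)
  obtain ⟨b, hmb⟩ := hG.preconnected.exists_adj_of_nontrivial m
  have hm0 : p m ≠ 0 := hp.ne_zero_of_adj hc hmb
  have hmadj : ∀ i, i ∈ univ.filter (¬G.Adj m ·) ↔ ¬G.Adj m i := by simp
  obtain ⟨hA, hAsum⟩ := hp.biclique_le_and_sum_eq hG hsum hm hmadj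
  obtain ⟨ξ, hmξ, hξ⟩ := exists_orthogonal_norm_eq_one hm0
  have hb := (hmadj b).not.2 (not_not.2 hmb)
  exact ⟨_, 2 - c, _, ⟨m, (hmadj m).2 G.irrefl⟩, ⟨b, hb⟩, hA,
    hm ▸ real_inner_self_pos.2 hm0, by linarith,
    hp.isJoinCoordinate hsum hspan haniso hm0 hm hA hmadj hb hAsum hmξ hξ⟩

end JoinCoordinate

section SignPattern

open SimpleGraph Finset

variable {V : Type*} {s : V → ℝ}

theorem exists_forall_edge_of_mul_eq {G : SimpleGraph V} [DecidableRel G.Adj] {T : Finset V}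
    (hsum : ∑ i ∈ T, s i = 0) (hne : ∃ i ∈ T, s i ≠ 0)
    (hmul : ∀ i ∈ T, ∀ j ∈ T, i ≠ j → s i * s j = if G.Adj i j then -1 else 0) :
    ∃ u ∈ T, ∃ v ∈ T, G.Adj u v ∧ ∀ i ∈ T, ∀ j ∈ T, G.Adj i j → (edge u v).Adj i j := by
  obtain ⟨u, hu, hsu⟩ := exists_pos_of_sum_zero_of_exists_nonzero s hsum hne
  obtain ⟨v, hv, hsv⟩ := exists_pos_of_sum_zero_of_exists_nonzero (fun i => -s i)
    (by rw [sum_neg_distrib, hsum, neg_zero]) (by simpa only [neg_ne_zero] using hne)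
  rw [neg_pos] at hsv
  have huv : u ≠ v := fun h => hsu.not_gt (h ▸ hsv)
  have hnonpos : ∀ i ∈ T, ∀ j ∈ T, i ≠ j → s i * s j ≤ 0 := fun i hi j hj hij => by
    rw [hmul i hi j hj hij]
    split_ifs <;> norm_num
  have hzero : ∀ w ∈ T, w ≠ u → w ≠ v → s w = 0 := fun w hw hwu hwv =>
    le_antisymm (nonpos_of_mul_nonpos_left (hnonpos w hw u hu hwu) hsu)
      (nonneg_of_mul_nonpos_left (hnonpos w hw v hv hwv) hsv)
  have hmem : ∀ i ∈ T, ∀ j ∈ T, G.Adj i j → i = u ∨ i = v := fun i hi j hj hij => by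
    by_contra! h
    have := hmul i hi j hj hij.ne
    rw [hzero i hi h.1 h.2, zero_mul, if_pos hij] at this
    norm_num at this
  refine ⟨u, hu, v, hv, ?_, fun i hi j hj hij => ?_⟩
  · by_contra hadj
    have := hmul u hu v hv huv
    rw [if_neg hadj] at this
    exact (mul_neg_of_pos_of_neg hsu hsv).ne this
  · rw [edge_adj]
    have hi' := hmem i hi j hj hij
    have hj' := hmem j hj i hi hij.symm
    have hne := hij.ne
    grind

theorem sum_sq_eq_of_mul_eq {P Q : Finset V} {k : ℝ} (hsum : ∑ i ∈ P, s i + ∑ j ∈ Q, s j = 0)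
    (hP : ∑ i ∈ P, s i ≠ 0) (hmul : ∀ i ∈ P, ∀ j ∈ Q, s i * s j = k) :
    ∑ i ∈ P, s i ^ 2 = -(k * #Q) := by
  have hrow : ∀ i ∈ P, s i * ∑ i ∈ P, s i = -(k * #Q) := fun i hi => by
    rw [eq_neg_of_add_eq_zero_left hsum, mul_neg, mul_sum, sum_congr rfl (hmul i hi), sum_const,
      nsmul_eq_mul, mul_comm]
  refine mul_left_cancel₀ hP ?_
  rw [mul_comm, sum_mul, sum_mul]
  refine sum_congr rfl fun i hi => ?_
  rw [← hrow i hi]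
  ring

theorem sum_sq_eq_of_mul_neg_eq {T : Finset V} {k : ℝ} (hsum : ∑ i ∈ T, s i = 0)
    (hne : ∀ i ∈ T, s i ≠ 0) (hmul : ∀ i ∈ T, ∀ j ∈ T, s i * s j < 0 → s i * s j = k) :
    ∑ i ∈ T, s i ^ 2 = -(k * #T) := by
  obtain rfl | ⟨t, ht⟩ := T.eq_empty_or_nonempty
  · simp
  have hsplit (f : V → ℝ) : ∑ i ∈ T with 0 < s i, f i + ∑ i ∈ T with ¬0 < s i, f i = ∑ i ∈ T, f i :=
    sum_filter_add_sum_filter_not _ _ _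
  have hcard : #{i ∈ T | 0 < s i} + #{i ∈ T | ¬0 < s i} = #T := card_filter_add_card_filter_not _
  have hPQ : ∀ i ∈ T.filter (0 < s ·), ∀ j ∈ T.filter (¬0 < s ·), s i * s j = k :=
    fun i hi j hj => by
      obtain ⟨hi, hsi⟩ := mem_filter.1 hi
      obtain ⟨hj, hsj⟩ := mem_filter.1 hj
      exact hmul i hi j hj
        (mul_neg_of_pos_of_neg hsi ((not_lt.1 hsj).lt_of_ne (hne j hj)))
  have hP : ∑ i ∈ T with 0 < s i, s i ≠ 0 := by
    obtain ⟨u, hu, hsu⟩ := exists_pos_of_sum_zero_of_exists_nonzero s hsum ⟨t, ht, hne t ht⟩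
    exact (sum_pos (fun i hi => (mem_filter.1 hi).2) ⟨u, mem_filter.2 ⟨hu, hsu⟩⟩).ne'
  rw [← hsplit] at hsum
  have hQ : ∑ i ∈ T with ¬0 < s i, s i ≠ 0 := fun hQ => hP (by rwa [hQ, add_zero] at hsum)
  rw [← hsplit, sum_sq_eq_of_mul_eq hsum hP hPQ,
    sum_sq_eq_of_mul_eq ((add_comm _ _).trans hsum) hQ fun j hj i hi =>
      (mul_comm _ _).trans (hPQ i hi j hj), ← hcard]
  push_cast
  ring

end SignPattern

section JoinClassification

open SimpleGraph Finset

variable {V : Type*} {G : SimpleGraph V}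

/-- `G` is complete bipartite with `k` vertices in one of its parts. -/
def IsBiclique (G : SimpleGraph V) (k : ℕ) : Prop :=
  ∃ A : Finset V, #A = k ∧ G = biclique A

/-- `G` is complete bipartite with an additional edge inside a part with `k` vertices. -/
def IsBicliquePlusEdge (G : SimpleGraph V) (k : ℕ) : Prop :=
  ∃ A : Finset V, #A = k ∧ ∃ u ∈ A, ∃ v ∈ A, u ≠ v ∧ G = biclique A ⊔ edge u v

namespace IsJoinCoordinate

variable [Fintype V] {A : Finset V} {y : ℝ} {s : V → ℝ} {a b : V}

theorem mul_eq_ite_of_mem [DecidableRel G.Adj] (h : IsJoinCoordinate G A y s)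
    (hA : biclique A ≤ G) (hb : b ∉ A) :
    ∀ i ∈ A, ∀ j ∈ A, i ≠ j → s i * s j = if G.Adj i j then -1 else 0 :=
  fun i hi j hj hij => by
    rw [h.mul_of_mem i hi j hj hij, dist_of_biclique_le hA hi hb hij]
    split_ifs <;> norm_num

theorem mul_eq_ite_of_notMem [DecidableRel G.Adj] (h : IsJoinCoordinate G A y s)
    (hA : biclique A ≤ G) (ha : a ∈ A) :
    ∀ i ∉ A, ∀ j ∉ A, i ≠ j → y * (s i * s j) = (if G.Adj i j then y else 2 * y) - 1 :=
  fun i hi j hj hij => by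
    rw [h.mul_of_notMem i hi j hj hij, dist_of_biclique_le hA ha hi hij]
    split_ifs <;> push_cast <;> ring

theorem card_compl_eq [DecidableEq V] (h : IsJoinCoordinate G A y s) :
    (#Aᶜ : ℝ) = y * Fintype.card V := by
  rw [card_compl, Nat.cast_sub (card_le_univ A), h.card_eq]
  ring

theorem isBicliquePlusEdge_of_mem (h : IsJoinCoordinate G A y s) (hA : biclique A ≤ G)
    (hb : b ∉ A) (hy : y < 1) (ha : a ∈ A) (hsa : s a ≠ 0) :
    IsBicliquePlusEdge G #A ∧ (2 * #A = Fintype.card V ∨ #A + 1 = Fintype.card V) := by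
  classical
  have hs : ∀ j ∉ A, s j = 0 := fun j hj =>
    (mul_eq_zero.1 (h.mul_of_mem_of_notMem a ha j hj)).resolve_left hsa
  have hite : ∀ i ∉ A, ∀ j ∉ A, i ≠ j → (if G.Adj i j then y else 2 * y) = 1 :=
    fun i hi j hj hij => by
      have := h.mul_eq_ite_of_notMem hA ha i hi j hj hij
      rwa [hs i hi, zero_mul, mul_zero, eq_comm, sub_eq_zero] at this
  have hout : ∀ i ∉ A, ∀ j ∉ A, ¬G.Adj i j := fun i hi j hj hij =>
    hy.ne ((if_pos hij).symm.trans (hite i hi j hj hij.ne))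
  obtain ⟨u, hu, v, hv, huv, hin⟩ :=
    exists_forall_edge_of_mul_eq h.sum_mem ⟨a, ha, hsa⟩ (h.mul_eq_ite_of_mem hA hb)
  refine ⟨⟨A, rfl, u, hu, v, hv, huv.ne, eq_biclique_sup_edge hA huv hin hout⟩, ?_⟩
  by_cases! hsub : ∃ i ∉ A, ∃ j ∉ A, i ≠ j
  · obtain ⟨i, hi, j, hj, hij⟩ := hsub
    have hyhalf := hite i hi j hj hij
    rw [if_neg (hout i hi j hj)] at hyhalf
    left
    rify
    linear_combination 2 * h.card_eq - (Fintype.card V : ℝ) * hyhalf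
  · have hcompl : #Aᶜ = 1 := card_eq_one.2 ⟨b, eq_singleton_iff_unique_mem.2
      ⟨mem_compl.2 hb, fun i hi => hsub i (mem_compl.1 hi) b hb⟩⟩
    rw [← card_add_card_compl A, hcompl]
    exact Or.inr rfl

theorem sum_compl [DecidableEq V] (h : IsJoinCoordinate G A y s) : ∑ i ∈ Aᶜ, s i = 0 := by
  have := sum_add_sum_compl A s
  rwa [h.sum_mem, h.sum_univ, zero_add] at this

theorem not_adj_of_mem (h : IsJoinCoordinate G A y s) (hA : biclique A ≤ G)
    (hs : ∀ i ∈ A, s i = 0) (hb : b ∉ A) : ∀ i ∈ A, ∀ j ∈ A, ¬G.Adj i j := by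
  classical
  intro i hi j hj hij
  have := h.mul_eq_ite_of_mem hA hb i hi j hj hij.ne
  rw [hs i hi, zero_mul, if_pos hij] at this
  norm_num at this

theorem exists_notMem_ne_zero (h : IsJoinCoordinate G A y s) (hs : ∀ i ∈ A, s i = 0) :
    ∃ i ∉ A, s i ≠ 0 :=
  let ⟨i, hi⟩ := h.exists_ne_zero
  ⟨i, fun hiA => hi (hs i hiA), hi⟩

theorem isBicliquePlusEdge_compl [DecidableEq V] (h : IsJoinCoordinate G A y s)
    (hA : biclique A ≤ G) (hs : ∀ i ∈ A, s i = 0) (ha : a ∈ A) (hb : b ∉ A) (hy : 2 * y = 1) :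
    IsBicliquePlusEdge G #Aᶜ ∧ 2 * #Aᶜ = Fintype.card V := by
  classical
  obtain ⟨i, hi, hsi⟩ := h.exists_notMem_ne_zero hs
  obtain ⟨u, hu, v, hv, huv, hin⟩ : ∃ u ∈ Aᶜ, ∃ v ∈ Aᶜ, G.Adj u v ∧
      ∀ i ∈ Aᶜ, ∀ j ∈ Aᶜ, G.Adj i j → (edge u v).Adj i j := by
    refine exists_forall_edge_of_mul_eq h.sum_compl ⟨i, mem_compl.2 hi, hsi⟩
      fun i hi j hj hij => ?_
    have := h.mul_eq_ite_of_notMem hA ha i (mem_compl.1 hi) j (mem_compl.1 hj) hij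
    split_ifs at this ⊢
    · linear_combination 2 * this + (1 - s i * s j) * hy
    · linear_combination 2 * this + (2 - s i * s j) * hy
  refine ⟨⟨Aᶜ, rfl, u, hu, v, hv, huv.ne, eq_biclique_sup_edge (by rwa [biclique_compl]) huv hin
    ?_⟩, ?_⟩
  · simpa only [mem_compl, not_not] using h.not_adj_of_mem hA hs hb
  · rify
    linear_combination 2 * h.card_compl_eq + (Fintype.card V : ℝ) * hy

theorem isBiclique_two (h : IsJoinCoordinate G A y s) (hA : biclique A ≤ G)
    (hs : ∀ i ∈ A, s i = 0) (ha : a ∈ A) (hy : 0 < y) {i j : V} (hi : i ∉ A) (hj : j ∉ A)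
    (hsij : s i * s j < 0) (hij : ¬G.Adj i j) : IsBiclique G 2 := by
  classical
  have hne : i ≠ j := fun h => (mul_self_nonneg (s j)).not_gt (h ▸ hsij)
  have hy' : 2 * y < 1 := by
    have := h.mul_eq_ite_of_notMem hA ha i hi j hj hne
    rw [if_neg hij] at this
    linarith [mul_neg_of_pos_of_neg hy hsij]
  have hneg : ∀ k ∉ A, ∀ l ∉ A, k ≠ l → s k * s l < 0 := fun k hk l hl hkl => by
    refine (pos_iff_neg_of_mul_neg ?_).1 hy
    rw [h.mul_eq_ite_of_notMem hA ha k hk l hl hkl]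
    split_ifs <;> linarith
  have hcompl : ∀ k ∉ A, k = i ∨ k = j := fun k hk => by
    by_contra! hk'
    refine (sq_nonneg (s i * s j * s k)).not_gt ?_
    have := mul_neg_of_pos_of_neg (mul_pos_of_neg_of_neg hsij (hneg k hk i hi hk'.1))
      (hneg k hk j hj hk'.2)
    linarith
  have hmem : ∀ k, k ∈ Aᶜ ↔ k = i ∨ k = j := fun k =>
    ⟨fun hk => hcompl k (mem_compl.1 hk), by rintro (rfl | rfl) <;> rwa [mem_compl]⟩
  refine ⟨Aᶜ, ?_, ?_⟩
  · rw [← card_pair hne]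
    congr 1
    ext k
    rw [hmem, mem_insert, mem_singleton]
  · refine (eq_biclique hA (h.not_adj_of_mem hA hs hj) fun k hk l hl hkl => ?_).trans
      (biclique_compl A).symm
    rcases hcompl k hk with rfl | rfl <;> rcases hcompl l hl with rfl | rfl
    exacts [G.irrefl hkl, hij hkl, hij hkl.symm, G.irrefl hkl]

theorem ne_zero_of_notMem (h : IsJoinCoordinate G A y s) (hA : biclique A ≤ G)
    (hs : ∀ i ∈ A, s i = 0) (ha : a ∈ A) (hy : y < 1) (hy2 : 2 * y ≠ 1) : ∀ i ∉ A, s i ≠ 0 := by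
  classical
  intro i hi hsi
  obtain ⟨j, hj, hsj⟩ := h.exists_notMem_ne_zero hs
  have := h.mul_eq_ite_of_notMem hA ha i hi j hj fun hij => hsj (hij ▸ hsi)
  rw [hsi, zero_mul, mul_zero, eq_comm, sub_eq_zero] at this
  split_ifs at this
  exacts [hy.ne this, hy2 this]

/- If all pairs of opposite sign were adjacent, their products would equal `(y - 1) / y`, which
forces `∑ i, s i ^ 2 = #A`. -/
theorem exists_mul_neg_not_adj (h : IsJoinCoordinate G A y s) (hA : biclique A ≤ G)
    (hs : ∀ i ∈ A, s i = 0) (ha : a ∈ A) (hy0 : 0 < y) (hy : y < 1) (hy2 : 2 * y ≠ 1) :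
    ∃ i ∉ A, ∃ j ∉ A, s i * s j < 0 ∧ ¬G.Adj i j := by
  classical
  by_contra! hadj
  have hmul : ∀ i ∈ Aᶜ, ∀ j ∈ Aᶜ, s i * s j < 0 → s i * s j = (y - 1) / y :=
    fun i hi j hj hsij => by
      rw [mem_compl] at hi hj
      have hij := hadj i hi j hj hsij
      rw [eq_div_iff hy0.ne', mul_comm, h.mul_eq_ite_of_notMem hA ha i hi j hj hij.ne, if_pos hij]
  refine h.sum_sq_ne ?_
  rw [← sum_add_sum_compl A, sum_eq_zero fun i hi => by rw [hs i hi, zero_pow two_ne_zero],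
    sum_sq_eq_of_mul_neg_eq h.sum_compl
      (fun i hi => h.ne_zero_of_notMem hA hs ha hy hy2 i (mem_compl.1 hi)) hmul,
    h.card_compl_eq, h.card_eq]
  field_simp
  ring

theorem isBiclique_or_isBicliquePlusEdge (h : IsJoinCoordinate G A y s) (hA : biclique A ≤ G)
    (ha : a ∈ A) (hb : b ∉ A) (hy0 : 0 < y) (hy : y < 1) :
    IsBiclique G 2 ∨ (∃ k, 2 * k = Fintype.card V ∧ IsBicliquePlusEdge G k) ∨
      ∃ k, k + 1 = Fintype.card V ∧ IsBicliquePlusEdge G k := by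
  classical
  by_cases! hs : ∃ i ∈ A, s i ≠ 0
  · obtain ⟨i, hi, hsi⟩ := hs
    obtain ⟨hG, hcard | hcard⟩ := h.isBicliquePlusEdge_of_mem hA hb hy hi hsi
    exacts [Or.inr (Or.inl ⟨_, hcard, hG⟩), Or.inr (Or.inr ⟨_, hcard, hG⟩)]
  by_cases hy2 : 2 * y = 1
  · obtain ⟨hG, hcard⟩ := h.isBicliquePlusEdge_compl hA hs ha hb hy2
    exact Or.inr (Or.inl ⟨_, hcard, hG⟩)
  · obtain ⟨i, hi, j, hj, hsij, hij⟩ := h.exists_mul_neg_not_adj hA hs ha hy0 hy hy2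
    exact Or.inl (h.isBiclique_two hA hs ha hy0 hi hj hsij hij)

end IsJoinCoordinate

end JoinClassification

section BicliqueIso

open SimpleGraph Finset

variable {V W : Type*}

section Equiv

variable [Fintype V] [Fintype W] {A : Finset V} {B : Finset W}

theorem exists_equiv_mem_iff (hVW : Fintype.card V = Fintype.card W) (hAB : #A = #B) :
    ∃ φ : V ≃ W, ∀ i, φ i ∈ B ↔ i ∈ A := by
  classical
  have e : {i // i ∈ A} ≃ {i // i ∈ B} := equivOfCardEq hAB
  have e' : {i // i ∉ A} ≃ {i // i ∉ B} := Fintype.equivOfCardEq <| by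
    rw [Fintype.card_subtype_compl, Fintype.card_subtype_compl, hVW, Fintype.card_congr e]
  refine ⟨(Equiv.sumCompl (· ∈ A)).symm.trans ((e.sumCongr e').trans (Equiv.sumCompl (· ∈ B))),
    fun i => ?_⟩
  by_cases hi : i ∈ A
  · simp [hi, Equiv.sumCompl_symm_apply_of_pos hi]
  · simp [hi, Equiv.sumCompl_symm_apply_of_neg hi, (e' ⟨i, hi⟩).2]

theorem exists_equiv_mem_iff_apply_eq (hVW : Fintype.card V = Fintype.card W) (hAB : #A = #B)
    {u v : V} {x y : W} (hu : u ∈ A) (hv : v ∈ A) (huv : u ≠ v) (hx : x ∈ B) (hy : y ∈ B)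
    (hxy : x ≠ y) : ∃ φ : V ≃ W, (∀ i, φ i ∈ B ↔ i ∈ A) ∧ φ u = x ∧ φ v = y := by
  classical
  obtain ⟨φ, hφ⟩ := exists_equiv_mem_iff hVW hAB
  refine ⟨(φ.trans (Equiv.swap (φ u) x)).trans (Equiv.swap (Equiv.swap (φ u) x (φ v)) y), ?_, ?_⟩
  · grind
  · grind [φ.injective.ne huv]

end Equiv

section Iso

variable {G : SimpleGraph V} {H : SimpleGraph W} {k : ℕ}

theorem IsBiclique.of_iso (hH : IsBiclique H k) (φ : G ≃g H) : IsBiclique G k := by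
  obtain ⟨B, hB, rfl⟩ := hH
  have hmem (i) : i ∈ B.map φ.toEquiv.symm.toEmbedding ↔ φ i ∈ B := mem_map_equiv
  refine ⟨B.map φ.toEquiv.symm.toEmbedding, (card_map _).trans hB, ?_⟩
  ext i j
  simp only [← φ.map_adj_iff, biclique_adj, hmem]

theorem IsBicliquePlusEdge.of_iso (hH : IsBicliquePlusEdge H k) (φ : G ≃g H) :
    IsBicliquePlusEdge G k := by
  obtain ⟨B, hB, x, hx, y, hy, hxy, rfl⟩ := hH
  have hmem (i) : i ∈ B.map φ.toEquiv.symm.toEmbedding ↔ φ i ∈ B := mem_map_equiv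
  have heq (i w) : φ i = w ↔ i = φ.symm w := φ.toEquiv.eq_symm_apply.symm
  refine ⟨B.map φ.toEquiv.symm.toEmbedding, (card_map _).trans hB, φ.symm x,
    mem_map_of_mem _ hx, φ.symm y, mem_map_of_mem _ hy, φ.symm.injective.ne hxy, ?_⟩
  ext i j
  simp only [← φ.map_adj_iff, sup_adj, biclique_adj, edge_adj, hmem, heq, φ.symm_apply_apply, ne_eq]

variable [Fintype V] [Fintype W]

theorem IsBiclique.nonempty_iso (hVW : Fintype.card V = Fintype.card W) (hG : IsBiclique G k)
    (hH : IsBiclique H k) : Nonempty (G ≃g H) := by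
  obtain ⟨A, hA, rfl⟩ := hG
  obtain ⟨B, hB, rfl⟩ := hH
  obtain ⟨φ, hφ⟩ := exists_equiv_mem_iff hVW (hA.trans hB.symm)
  exact ⟨φ, by simp only [biclique_adj, hφ, implies_true]⟩

theorem IsBicliquePlusEdge.nonempty_iso (hVW : Fintype.card V = Fintype.card W)
    (hG : IsBicliquePlusEdge G k) (hH : IsBicliquePlusEdge H k) : Nonempty (G ≃g H) := by
  obtain ⟨A, hA, u, hu, v, hv, huv, rfl⟩ := hG
  obtain ⟨B, hB, x, hx, y, hy, hxy, rfl⟩ := hH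
  obtain ⟨φ, hφ, rfl, rfl⟩ :=
    exists_equiv_mem_iff_apply_eq hVW (hA.trans hB.symm) hu hv huv hx hy hxy
  exact ⟨φ, by
    simp only [sup_adj, biclique_adj, edge_adj, hφ, φ.injective.eq_iff, ne_eq, implies_true]⟩

end Iso

theorem completeBipartiteGraph_eq_biclique_inl [Fintype V] :
    completeBipartiteGraph V W = biclique (univ.map .inl) := by
  ext (i | i) (j | j) <;> simp [biclique_adj]

theorem completeBipartiteGraph_eq_biclique_inr [Fintype W] :
    completeBipartiteGraph V W = biclique (univ.map .inr) := by
  ext (i | i) (j | j) <;> simp [biclique_adj]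

theorem isBiclique_completeBipartiteGraph_fin (k l : ℕ) :
    IsBiclique (completeBipartiteGraph (Fin k) (Fin l)) k :=
  ⟨univ.map .inl, by simp, completeBipartiteGraph_eq_biclique_inl⟩

theorem isBicliquePlusEdge_bipPlusEdge (k : ℕ) : IsBicliquePlusEdge (bipPlusEdge k) (k + 2) :=
  ⟨univ.map .inl, by simp [add_comm], .inl (.inl false), by simp, .inl (.inl true), by simp,
    by simp, congrArg (· ⊔ _) completeBipartiteGraph_eq_biclique_inl⟩

theorem isBicliquePlusEdge_starPlusEdge (k : ℕ) : IsBicliquePlusEdge (starPlusEdge k) (k + 2) :=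
  ⟨univ.map .inr, by simp [add_comm], .inr (.inl false), by simp, .inr (.inl true), by simp,
    by simp, congrArg (· ⊔ _) completeBipartiteGraph_eq_biclique_inr⟩

end BicliqueIso

section BicliqueSpectrum

open Module SimpleGraph Finset

variable {V : Type*} [Fintype V] [DecidableEq V] {G : SimpleGraph V} {A : Finset V} {u v : V}
  {lam κ : ℝ}

/-- The vector of sum zero that is constant on each of `A` and `Aᶜ`. -/
def partContrast (A : Finset V) (i : V) : ℝ :=
  if i ∈ A then #Aᶜ else -#A

theorem sum_partContrast_mul (A : Finset V) (f : V → ℝ) :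
    ∑ i, partContrast A i * f i = #Aᶜ * ∑ i ∈ A, f i - #A * ∑ i ∈ Aᶜ, f i := by
  rw [← sum_add_sum_compl A, mul_sum, sub_eq_add_neg, ← neg_mul, mul_sum]
  congr 1 <;> refine sum_congr rfl fun i hi => ?_
  · rw [partContrast, if_pos hi]
  · rw [partContrast, if_neg (mem_compl.1 hi)]

theorem sum_partContrast (A : Finset V) : ∑ i, partContrast A i = 0 := by
  have := sum_partContrast_mul A 1
  simp only [Pi.one_apply, mul_one, sum_const, nsmul_eq_mul] at this
  rw [this, mul_comm, sub_self]

theorem sum_partContrast_mul_self (A : Finset V) :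
    ∑ i, partContrast A i * partContrast A i = Fintype.card V * (#A * #Aᶜ) := by
  have hpos : ∑ i ∈ A, partContrast A i = #A * #Aᶜ := by
    rw [sum_congr rfl fun i hi => show partContrast A i = #Aᶜ from if_pos hi, sum_const,
      nsmul_eq_mul]
  have hneg : ∑ i ∈ Aᶜ, partContrast A i = -(#A * #Aᶜ) :=
    eq_neg_of_add_eq_zero_right <|
      hpos ▸ (sum_add_sum_compl A (partContrast A)).trans (sum_partContrast A)
  rw [sum_partContrast_mul, hpos, hneg, ← card_add_card_compl A]
  push_cast
  ring

/-- The matrix whose pairwise orthogonal rows are the constant vector, `partContrast A` and the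
difference of the indicators of two vertices `u, v ∈ A`. -/
def bicliqueFrame (A : Finset V) (u v : V) : Matrix (Fin 3) V ℝ :=
  of ![1, partContrast A, Pi.single u 1 - Pi.single v 1]

theorem bicliqueFrame_mul_transpose (hu : u ∈ A) (hv : v ∈ A) (huv : u ≠ v) :
    bicliqueFrame A u v * (bicliqueFrame A u v)ᵀ =
      diagonal ![(Fintype.card V : ℝ), Fintype.card V * (#A * #Aᶜ), 2] := by
  have hcontrast : partContrast A u = partContrast A v := by simp only [partContrast, hu, hv]
  have hsq : partContrast A ⬝ᵥ partContrast A = Fintype.card V * (#A * #Aᶜ) :=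
    sum_partContrast_mul_self A
  have h0 : bicliqueFrame A u v 0 = 1 := rfl
  have h1 : bicliqueFrame A u v 1 = partContrast A := rfl
  have h2 : bicliqueFrame A u v 2 = Pi.single u 1 - Pi.single v 1 := rfl
  ext i j
  change bicliqueFrame A u v i ⬝ᵥ bicliqueFrame A u v j = _
  fin_cases i <;> fin_cases j <;>
    simp [h0, h1, h2, dotProduct_sub, sub_dotProduct, hcontrast, huv, huv.symm, hsq,
      sum_partContrast, dotProduct_one, one_dotProduct, one_add_one_eq_two]

theorem transpose_bicliqueFrame_mul_diagonal_mul_apply (A : Finset V) (u v : V) (κ : Fin 3 → ℝ)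
    (i j : V) : ((bicliqueFrame A u v)ᵀ * diagonal κ * bicliqueFrame A u v) i j =
      κ 0 + κ 1 * (partContrast A i * partContrast A j) +
        κ 2 * (bicliqueFrame A u v 2 i * bicliqueFrame A u v 2 j) := by
  have h0 (k) : bicliqueFrame A u v 0 k = 1 := rfl
  have h1 (k) : bicliqueFrame A u v 1 k = partContrast A k := rfl
  rw [mul_apply, Fin.sum_univ_three]
  simp only [mul_diagonal, transpose_apply, h0, h1]
  ring

theorem smul_one_sub_bicliqueFrame_mulVec_one (hu : u ∈ A) (hv : v ∈ A) (huv : u ≠ v)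
    {κ : Fin 3 → ℝ} (hκ : κ 0 * Fintype.card V = lam) :
    (lam • 1 - (bicliqueFrame A u v)ᵀ * diagonal κ * bicliqueFrame A u v) *ᵥ 1 = 0 := by
  have hone : (1 : V → ℝ) = (bicliqueFrame A u v)ᵀ *ᵥ Pi.single 0 1 :=
    (mulVec_single_one (bicliqueFrame A u v)ᵀ 0).symm
  rw [smul_one_sub_mulVec, hone,
    mulVec_transpose_mulVec_of_orthogonal_rows (bicliqueFrame_mul_transpose hu hv huv),
    ← mulVec_smul, ← mulVec_sub, show _ - _ = (0 : Fin 3 → ℝ) from ?_, mulVec_zero]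
  ext i
  fin_cases i <;> simp [hκ]

theorem bicliqueFrame_two_apply_of_notMem (hu : u ∈ A) (hv : v ∈ A) {i : V} (hi : i ∉ A) :
    bicliqueFrame A u v 2 i = 0 := by
  change (Pi.single u 1 - Pi.single v 1 : V → ℝ) i = 0
  rw [Pi.sub_apply, Pi.single_eq_of_ne (ne_of_mem_of_not_mem hu hi).symm,
    Pi.single_eq_of_ne (ne_of_mem_of_not_mem hv hi).symm, sub_zero]

theorem distLaplacian_eq_of_biclique_le (hA : biclique A ≤ G) (hu : u ∈ A) (hv : v ∈ A)
    (huv : u ≠ v) {b : V} (hb : b ∉ A)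
    (hin : ∀ i ∈ A, ∀ j ∈ A, i ≠ j → (G.dist i j : ℝ) =
      (lam - #Aᶜ) / #A + κ * (bicliqueFrame A u v 2 i * bicliqueFrame A u v 2 j))
    (hout : ∀ i ∉ A, ∀ j ∉ A, i ≠ j → (G.dist i j : ℝ) = (lam - #A) / #Aᶜ) :
    distLaplacian G = lam • 1 - (bicliqueFrame A u v)ᵀ * diagonal ![lam / Fintype.card V,
      (lam - Fintype.card V) / (Fintype.card V * (#A * #Aᶜ)), κ] * bicliqueFrame A u v := by
  have hcard : (Fintype.card V : ℝ) = #A + #Aᶜ := mod_cast (card_add_card_compl A).symm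
  have hpos : (0 : ℝ) < #A := mod_cast card_pos.2 ⟨u, hu⟩
  have hpos' : (0 : ℝ) < #Aᶜ := mod_cast card_pos.2 ⟨b, mem_compl.2 hb⟩
  have hn : (Fintype.card V : ℝ) ≠ 0 := hcard ▸ (add_pos hpos hpos').ne'
  have hg := fun {i} => bicliqueFrame_two_apply_of_notMem (i := i) hu hv
  rw [biclique_le_iff] at hA
  refine eq_of_offDiag_eq_of_mulVec_one_eq (fun i j hij => ?_) ?_
  · rw [distLaplacian_apply_of_ne hij, Matrix.sub_apply, Matrix.smul_apply, one_apply_ne hij,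
      smul_zero, zero_sub, neg_inj, transpose_bicliqueFrame_mul_diagonal_mul_apply]
    by_cases hi : i ∈ A <;> by_cases hj : j ∈ A <;>
      simp only [partContrast, hi, hj, if_true, if_false]
    · rw [hin i hi j hj hij]
      simp only [hcard, Matrix.cons_val]
      field_simp
      ring
    · rw [dist_eq_one_iff_adj.2 (hA i hi j hj), hg hj]
      simp only [hcard, Matrix.cons_val, Nat.cast_one]
      field_simp
      ring
    · rw [dist_eq_one_iff_adj.2 (hA j hj i hi).symm, hg hi]
      simp only [hcard, Matrix.cons_val, Nat.cast_one]
      field_simp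
      ring
    · rw [hout i hi j hj hij, hg hi]
      simp only [hcard, Matrix.cons_val]
      field_simp
      ring
  · rw [distLaplacian_mulVec_one,
      smul_one_sub_bicliqueFrame_mulVec_one hu hv huv (div_mul_cancel₀ _ hn)]

theorem bicliqueFrame_two_mul_apply (huv : u ≠ v) {i j : V} (hij : i ≠ j) :
    bicliqueFrame A u v 2 i * bicliqueFrame A u v 2 j = if (edge u v).Adj i j then -1 else 0 := by
  change (Pi.single u 1 - Pi.single v 1 : V → ℝ) i * (Pi.single u 1 - Pi.single v 1 : V → ℝ) j = _
  simp only [edge_adj, Pi.sub_apply, Pi.single_apply]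
  grind

theorem eigenvalues_distLaplacian_eq_of_biclique_le (hA : biclique A ≤ G) (hu : u ∈ A)
    (hv : v ∈ A) (huv : u ≠ v) {b : V} (hb : b ∉ A) (hcard : 3 < Fintype.card V)
    (hlam : Fintype.card V < lam) (hκ : κ ≠ 0)
    (hin : ∀ i ∈ A, ∀ j ∈ A, i ≠ j → (G.dist i j : ℝ) =
      (lam - #Aᶜ) / #A + κ * (bicliqueFrame A u v 2 i * bicliqueFrame A u v 2 j))
    (hout : ∀ i ∉ A, ∀ j ∉ A, i ≠ j → (G.dist i j : ℝ) = (lam - #A) / #Aᶜ) :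
    {μ : ℝ | End.HasEigenvalue (distLaplacian G).mulVecLin μ} =
        {lam, 0, (Fintype.card V : ℝ), lam - 2 * κ} ∧
      eigMult (distLaplacian G) lam + 3 = Fintype.card V := by
  have hn : (0 : ℝ) < Fintype.card V := mod_cast by lia
  have hpos : (#A : ℝ) * #Aᶜ ≠ 0 := mul_ne_zero (mod_cast card_ne_zero_of_mem hu)
    (mod_cast card_ne_zero_of_mem (mem_compl.2 hb))
  have hs : ∀ i, ![(Fintype.card V : ℝ), Fintype.card V * (#A * #Aᶜ), 2] i ≠ 0 := by
    simp [Fin.forall_fin_succ, hn.ne', mul_ne_zero_iff.1 hpos]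
  have hκ' : ∀ i, ![lam / Fintype.card V,
      (lam - Fintype.card V) / (Fintype.card V * (#A * #Aᶜ)), κ] i ≠ 0 := by
    simp [Fin.forall_fin_succ, hn.ne', mul_ne_zero_iff.1 hpos, hκ, (hn.trans hlam).ne',
      sub_ne_zero.2 hlam.ne']
  have hrows := bicliqueFrame_mul_transpose hu hv huv
  rw [distLaplacian_eq_of_biclique_le hA hu hv huv hb hin hout]
  refine ⟨Set.ext fun μ => ?_, eigMult_smul_one_sub_add_card hs hκ' hrows⟩
  rw [Set.mem_ofPred_eq, hasEigenvalue_smul_one_sub_iff hs hκ' hrows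
    (by rwa [Fintype.card_fin])]
  simp [Fin.exists_fin_succ, div_mul_cancel₀ _ (mul_ne_zero hn.ne' hpos), div_mul_cancel₀ _ hn.ne',
    mul_comm κ]

theorem ncard_eigenvalues_and_eigMult_of_biclique_le (hA : biclique A ≤ G) (hu : u ∈ A)
    (hv : v ∈ A) (huv : u ≠ v) {b : V} (hb : b ∉ A) (hcard : 3 < Fintype.card V)
    (hlam : Fintype.card V < lam) (hκ : 0 < κ) (hlamκ : lam - 2 * κ ≠ 0)
    (hlamκ' : lam - 2 * κ ≠ Fintype.card V)
    (hin : ∀ i ∈ A, ∀ j ∈ A, i ≠ j → (G.dist i j : ℝ) =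
      (lam - #Aᶜ) / #A + κ * (bicliqueFrame A u v 2 i * bicliqueFrame A u v 2 j))
    (hout : ∀ i ∉ A, ∀ j ∉ A, i ≠ j → (G.dist i j : ℝ) = (lam - #A) / #Aᶜ) :
    {μ : ℝ | End.HasEigenvalue (distLaplacian G).mulVecLin μ}.ncard = 4 ∧
      eigMult (distLaplacian G) (lambdaMax (distLaplacian G)) + 3 = Fintype.card V := by
  have hn : (0 : ℝ) < Fintype.card V := mod_cast by lia
  obtain ⟨hset, hmult⟩ := eigenvalues_distLaplacian_eq_of_biclique_le hA hu hv huv hb hcard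
    hlam hκ.ne' hin hout
  have hgreatest : IsGreatest {μ : ℝ | End.HasEigenvalue (distLaplacian G).mulVecLin μ} lam := by
    rw [hset]
    refine ⟨.inl rfl, ?_⟩
    rintro μ (rfl | rfl | rfl | rfl) <;> linarith
  rw [(isGreatest_lambdaMax hgreatest.nonempty).unique hgreatest, hset,
    Set.ncard_insert_of_notMem, Set.ncard_insert_of_notMem, Set.ncard_pair hlamκ'.symm]
  · exact ⟨rfl, hmult⟩
  · simp [hn.ne, hlamκ.symm]
  · simp [(hn.trans hlam).ne', hlam.ne', eq_sub_iff_add_eq, hκ.ne']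

theorem IsBiclique.ncard_eigenvalues_and_eigMult (hG : IsBiclique G 2)
    (hn : 5 ≤ Fintype.card V) :
    {μ : ℝ | End.HasEigenvalue (distLaplacian G).mulVecLin μ}.ncard = 4 ∧
      eigMult (distLaplacian G) (lambdaMax (distLaplacian G)) + 3 = Fintype.card V := by
  classical
  obtain ⟨A, hA, rfl⟩ := hG
  have hcard := card_add_card_compl A
  obtain ⟨b, hb⟩ : Aᶜ.Nonempty := card_pos.1 (by lia)
  rw [mem_compl] at hb
  obtain ⟨u, v, huv, rfl⟩ := card_eq_two.1 hA
  have hAr : (#{u, v} : ℝ) = 2 := mod_cast hA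
  have hcr : (Fintype.card V : ℝ) = 2 + #{u, v}ᶜ := by rw [← hAr]; exact mod_cast hcard.symm
  have hc : (3 : ℝ) ≤ #{u, v}ᶜ := mod_cast (by lia : 3 ≤ #{u, v}ᶜ)
  have hu := mem_insert_self u {v}
  refine ncard_eigenvalues_and_eigMult_of_biclique_le (lam := 2 * #{u, v}ᶜ + 2)
    (κ := (#{u, v}ᶜ - 2) / 2) le_rfl hu (mem_insert_of_mem (mem_singleton_self v)) huv hb
    (by lia) (by linarith) (by linarith) (by linarith) (by linarith)
    (fun i hi j hj hij => ?_) fun i hi j hj hij => ?_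
  · rw [dist_of_biclique_le le_rfl hu hb hij, bicliqueFrame_two_mul_apply huv hij,
      if_neg (by simp [biclique_adj, hi, hj]), if_pos (by grind), hAr]
    push_cast
    ring
  · rw [dist_of_biclique_le le_rfl hu hb hij, if_neg (by simp [biclique_adj, hi, hj]), hAr]
    field_simp
    push_cast
    ring

theorem ncard_eigenvalues_and_eigMult_biclique_sup_edge (hu : u ∈ A) (hv : v ∈ A) (huv : u ≠ v)
    {b : V} (hb : b ∉ A) (hA : 3 ≤ #A) (hout : ∀ i ∉ A, ∀ j ∉ A, i ≠ j → #A = #Aᶜ) :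
    {μ : ℝ | End.HasEigenvalue (distLaplacian (biclique A ⊔ edge u v)).mulVecLin μ}.ncard = 4 ∧
      eigMult (distLaplacian (biclique A ⊔ edge u v))
        (lambdaMax (distLaplacian (biclique A ⊔ edge u v))) + 3 = Fintype.card V := by
  classical
  have hb' : 1 ≤ #Aᶜ := card_pos.2 ⟨b, mem_compl.2 hb⟩
  have hcard := card_add_card_compl A
  have hcr : (Fintype.card V : ℝ) = #A + #Aᶜ := mod_cast hcard.symm
  have hAr : (3 : ℝ) ≤ #A := mod_cast hA
  have hbr : (1 : ℝ) ≤ #Aᶜ := mod_cast hb'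
  refine ncard_eigenvalues_and_eigMult_of_biclique_le (lam := 2 * #A + #Aᶜ) (κ := 1)
    le_sup_left hu hv huv hb (by lia) (by linarith) one_pos (by linarith) (by linarith)
    (fun i hi j hj hij => ?_) fun i hi j hj hij => ?_
  · have hadj : (biclique A ⊔ edge u v).Adj i j ↔ (edge u v).Adj i j := by
      simp [sup_adj, biclique_adj, hi, hj]
    rw [dist_of_biclique_le le_sup_left hu hb hij, bicliqueFrame_two_mul_apply huv hij,
      if_congr hadj rfl rfl]
    split_ifs <;> field_simp <;> push_cast <;> ring
  · have hadj : ¬(biclique A ⊔ edge u v).Adj i j := by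
      grind [biclique_adj]
    rw [dist_of_biclique_le le_sup_left hu hb hij, if_neg hadj, hout i hi j hj hij]
    field_simp
    push_cast
    ring

theorem IsBicliquePlusEdge.ncard_eigenvalues_and_eigMult_of_two_mul_eq_card {k : ℕ}
    (hG : IsBicliquePlusEdge G k) (hk : 2 * k = Fintype.card V) (hk3 : 3 ≤ k) :
    {μ : ℝ | End.HasEigenvalue (distLaplacian G).mulVecLin μ}.ncard = 4 ∧
      eigMult (distLaplacian G) (lambdaMax (distLaplacian G)) + 3 = Fintype.card V := by
  obtain ⟨A, rfl, u, hu, v, hv, huv, rfl⟩ := hG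
  have hcard := card_add_card_compl A
  obtain ⟨b, hb⟩ : Aᶜ.Nonempty := card_pos.1 (by lia)
  exact ncard_eigenvalues_and_eigMult_biclique_sup_edge hu hv huv (mem_compl.1 hb) hk3
    fun _ _ _ _ _ => by lia

theorem IsBicliquePlusEdge.ncard_eigenvalues_and_eigMult_of_add_one_eq_card {k : ℕ}
    (hG : IsBicliquePlusEdge G k) (hk : k + 1 = Fintype.card V) (hk3 : 3 ≤ k) :
    {μ : ℝ | End.HasEigenvalue (distLaplacian G).mulVecLin μ}.ncard = 4 ∧
      eigMult (distLaplacian G) (lambdaMax (distLaplacian G)) + 3 = Fintype.card V := by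
  obtain ⟨A, rfl, u, hu, v, hv, huv, rfl⟩ := hG
  have hcard := card_add_card_compl A
  obtain ⟨b, hb⟩ : ∃ b, Aᶜ = {b} := card_eq_one.1 (by lia)
  have hmem (i) : i ∉ A ↔ i = b := by rw [← mem_compl, hb, mem_singleton]
  exact ncard_eigenvalues_and_eigMult_biclique_sup_edge hu hv huv ((hmem b).2 rfl) hk3
    fun i hi j hj hij => absurd (((hmem i).1 hi).trans ((hmem j).1 hj).symm) hij

end BicliqueSpectrum

theorem four_distinct_eigenvalues_classification_general {V : Type*} [Fintype V] [DecidableEq V]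
    {n : ℕ} (hn : 6 ≤ n) (hcard : Fintype.card V = n) {G : SimpleGraph V} (hG : G.Connected) :
    ({μ : ℝ | Module.End.HasEigenvalue (distLaplacian G).mulVecLin μ}.ncard = 4 ∧
        eigMult (distLaplacian G) (lambdaMax (distLaplacian G)) = n - 3) ↔
      (Nonempty (G ≃g completeBipartiteGraph (Fin 2) (Fin (n - 2))) ∨
        (Even n ∧ Nonempty (G ≃g bipPlusEdge (n / 2 - 2))) ∨
        Nonempty (G ≃g starPlusEdge (n - 3))) := by
  subst hcard
  have hbip := isBicliquePlusEdge_bipPlusEdge (Fintype.card V / 2 - 2)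
  have hstar := isBicliquePlusEdge_starPlusEdge (Fintype.card V - 3)
  rw [eq_tsub_iff_add_eq_of_le (by lia)]
  constructor
  · rintro ⟨hfour, hmult⟩
    obtain ⟨A, y, s, ⟨a, ha⟩, ⟨b, hb⟩, hA, hy0, hy, h⟩ := exists_isJoinCoordinate hG hn hfour hmult
    rcases h.isBiclique_or_isBicliquePlusEdge hA ha hb hy0 hy with hK | ⟨k, hk, hE⟩ | ⟨k, hk, hS⟩
    · exact .inl <| hK.nonempty_iso (by simp only [Fintype.card_sum, Fintype.card_fin]; lia)
        (isBiclique_completeBipartiteGraph_fin _ _)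
    · obtain rfl : k = Fintype.card V / 2 - 2 + 2 := by lia
      exact .inr <| .inl ⟨⟨Fintype.card V / 2, by lia⟩, hE.nonempty_iso
        (by simp only [Fintype.card_sum, Fintype.card_fin, Fintype.card_bool]; lia) hbip⟩
    · obtain rfl : k = Fintype.card V - 3 + 2 := by lia
      exact .inr <| .inr <| hS.nonempty_iso
        (by simp only [Fintype.card_sum, Fintype.card_fin, Fintype.card_bool, Fintype.card_unit]
            lia) hstar
  · rintro (⟨⟨φ⟩⟩ | ⟨⟨m, hm⟩, ⟨φ⟩⟩ | ⟨⟨φ⟩⟩)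
    · exact ((isBiclique_completeBipartiteGraph_fin _ _).of_iso φ).ncard_eigenvalues_and_eigMult
        (by lia)
    · exact (hbip.of_iso φ).ncard_eigenvalues_and_eigMult_of_two_mul_eq_card (by lia) (by lia)
    · exact (hstar.of_iso φ).ncard_eigenvalues_and_eigMult_of_add_one_eq_card (by lia) (by lia)

/-- For `n ≥ 6`, a connected graph `G` on `n` vertices has exactly four
distinct distance Laplacian eigenvalues with the largest one of multiplicity `n - 3` if and
only if `G` is isomorphic to one of `K_{2,n-2}`, `K_{n/2,n/2}+e` (`n` even), `K_{1,n-1}+e`. -/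
theorem four_distinct_eigenvalues_classification
    (n : ℕ) (hn : 6 ≤ n) (G : SimpleGraph (Fin n)) (hG : G.Connected) :
    ({μ : ℝ | Module.End.HasEigenvalue (distLaplacian G).mulVecLin μ}.ncard = 4 ∧
        eigMult (distLaplacian G) (lambdaMax (distLaplacian G)) = n - 3) ↔
      (Nonempty (G ≃g completeBipartiteGraph (Fin 2) (Fin (n - 2))) ∨
        (Even n ∧ Nonempty (G ≃g bipPlusEdge (n / 2 - 2))) ∨
        Nonempty (G ≃g starPlusEdge (n - 3))) :=
  four_distinct_eigenvalues_classification_general hn (Fintype.card_fin n) hG
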